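/- arXiv:2502.10128 — 6 statements merged into one kernel-verified Lean document; each statement's English description precedes it below -/
import Mathlib

section
/- For every consecutive pattern σ of length k−1 and the quasi-consecutive pattern p = σk, the descent polynomials satisfy the recurrence A_{n+1}^p(t) = t·∑_{i=0}^{n−1} binom(n,i)·A_i^σ(t)·A_{n−i}^p(t) + A_n^σ(t) for all n ≥ 0, where the empty sum (n = 0) is 0. -/
open scoped Classical

/-- The number of descents of a permutation of `Fin n` (one-line notation `π 0, π 1, …`). -/
def des {n : ℕ} (π : Equiv.Perm (Fin n)) : ℕ :=
  (Finset.univ.filter fun i : Fin n =>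
    ∃ h : (i : ℕ) + 1 < n, π ⟨(i : ℕ) + 1, h⟩ < π i).card

/-- `π` contains an occurrence of the consecutive pattern `σ` (a window of `m`
consecutive entries whose standardization is `σ`). -/
def ConsecOccurs {m n : ℕ} (σ : Equiv.Perm (Fin m)) (π : Equiv.Perm (Fin n)) : Prop :=
  ∃ (i : ℕ) (h : i + m ≤ n),
    ∀ a b : Fin m,
      (π ⟨i + (a : ℕ), by have := a.isLt; omega⟩ <
        π ⟨i + (b : ℕ), by have := b.isLt; omega⟩ ↔ σ a < σ b)

/-- `π` avoids the consecutive pattern `σ`. -/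
def ConsecAvoids {m n : ℕ} (σ : Equiv.Perm (Fin m)) (π : Equiv.Perm (Fin n)) : Prop :=
  ¬ ConsecOccurs σ π

/-- `π` contains an occurrence of the quasi-consecutive pattern `p = σk`, i.e. a window of
`m = k - 1` consecutive entries forming an occurrence of `σ` followed by a later entry
larger than all of them. -/
def QuasiOccurs {m n : ℕ} (σ : Equiv.Perm (Fin m)) (π : Equiv.Perm (Fin n)) : Prop :=
  ∃ (i j : ℕ) (hij : i + m ≤ j) (hj : j < n),
    (∀ a b : Fin m,
      (π ⟨i + (a : ℕ), by have := a.isLt; omega⟩ <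
        π ⟨i + (b : ℕ), by have := b.isLt; omega⟩ ↔ σ a < σ b)) ∧
    ∀ a : Fin m, π ⟨i + (a : ℕ), by have := a.isLt; omega⟩ < π ⟨j, hj⟩

/-- `π` avoids the quasi-consecutive pattern `p = σk`. -/
def QuasiAvoids {m n : ℕ} (σ : Equiv.Perm (Fin m)) (π : Equiv.Perm (Fin n)) : Prop :=
  ¬ QuasiOccurs σ π

/-- `A_n^σ(t)`, the descent polynomial of `σ`-avoiding permutations of length `n`. -/
noncomputable def AconsPoly {m : ℕ} (σ : Equiv.Perm (Fin m)) (n : ℕ) : Polynomial ℚ :=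
  ∑ π ∈ Finset.univ.filter (fun π : Equiv.Perm (Fin n) => ConsecAvoids σ π),
    Polynomial.X ^ des π

/-- `A_n^p(t)` for the quasi-consecutive pattern `p = σk`. -/
noncomputable def AquasiPoly {m : ℕ} (σ : Equiv.Perm (Fin m)) (n : ℕ) : Polynomial ℚ :=
  ∑ π ∈ Finset.univ.filter (fun π : Equiv.Perm (Fin n) => QuasiAvoids σ π),
    Polynomial.X ^ des π

/-- Consecutive occurrence of `σ` in a list of naturals. -/
def LC {m : ℕ} (σ : Equiv.Perm (Fin m)) (l : List ℕ) : Prop :=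
  ∃ i : ℕ, i + m ≤ l.length ∧
    ∀ a b : Fin m, (l.getD (i + (a : ℕ)) 0 < l.getD (i + (b : ℕ)) 0 ↔ σ a < σ b)

/-- Quasi-consecutive occurrence in a list of naturals. -/
def LQ {m : ℕ} (σ : Equiv.Perm (Fin m)) (l : List ℕ) : Prop :=
  ∃ i j : ℕ, i + m ≤ j ∧ j < l.length ∧
    (∀ a b : Fin m, (l.getD (i + (a : ℕ)) 0 < l.getD (i + (b : ℕ)) 0 ↔ σ a < σ b)) ∧
    ∀ a : Fin m, l.getD (i + (a : ℕ)) 0 < l.getD j 0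

/-- Descents of a list. -/
def LD (l : List ℕ) : ℕ :=
  ∑ k ∈ Finset.range (l.length - 1), if l.getD (k + 1) 0 < l.getD k 0 then 1 else 0

theorem LD_nil : LD [] = 0 := by simp [LD]

theorem LD_single (x : ℕ) : LD [x] = 0 := by simp [LD]

theorem LD_cons (x y : ℕ) (l : List ℕ) :
    LD (x :: y :: l) = LD (y :: l) + (if y < x then 1 else 0) := by
  simp only [LD, List.length_cons, Nat.add_sub_cancel]
  rw [Finset.sum_range_succ']
  simp

theorem LD_split (M : ℕ) (R : List ℕ) : ∀ L : List ℕ, (∀ x ∈ L, x < M) →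
    LD (L ++ M :: R) = LD L + LD (M :: R)
  | [], _ => by simp [LD_nil]
  | [x], h => by
      have : x < M := h x (by simp)
      simp [LD_cons, LD_single]
      omega
  | x :: y :: L, h => by
      have ih := LD_split M R (y :: L) (fun z hz => h z (List.mem_cons_of_mem _ hz))
      simp only [List.cons_append] at ih ⊢
      rw [LD_cons, LD_cons, ih]
      omega

theorem LD_max (M : ℕ) (R : List ℕ) (h : ∀ x ∈ R, x < M) (hR : R ≠ []) :
    LD (M :: R) = LD R + 1 := by
  cases R with
  | nil => exact absurd rfl hR
  | cons y R =>
    rw [LD_cons, if_pos (h y (by simp))]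

theorem getD_left (L R : List ℕ) (M k : ℕ) (h : k < L.length) :
    (L ++ M :: R).getD k 0 = L.getD k 0 := List.getD_append _ _ _ _ h

theorem getD_mid (L R : List ℕ) (M : ℕ) : (L ++ M :: R).getD L.length 0 = M := by
  rw [List.getD_append_right _ _ _ _ le_rfl]; simp

theorem getD_right (L R : List ℕ) (M k : ℕ) :
    (L ++ M :: R).getD (L.length + 1 + k) 0 = R.getD k 0 := by
  rw [List.getD_append_right _ _ _ _ (by omega)]
  have : L.length + 1 + k - L.length = k + 1 := by omega
  rw [this, List.getD_cons_succ]

theorem getD_mem (L : List ℕ) (k : ℕ) (h : k < L.length) : L.getD k 0 ∈ L := by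
  rw [List.getD_eq_getElem _ _ h]; exact List.getElem_mem h

theorem LQ_split {m : ℕ} (σ : Equiv.Perm (Fin m)) (L R : List ℕ) (M : ℕ)
    (hL : ∀ x ∈ L, x < M) (hR : ∀ x ∈ R, x < M) :
    LQ σ (L ++ M :: R) ↔ LC σ L ∨ LQ σ R := by
  constructor
  · rintro ⟨i, j, hij, hj, h1, h2⟩
    rcases le_or_gt (i + m) L.length with h | h
    · left
      refine ⟨i, h, fun a b => ?_⟩
      rw [← h1 a b, getD_left _ _ _ _ (by omega), getD_left _ _ _ _ (by omega)]
    · right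
      rcases le_or_gt i L.length with hi | hi
      · exfalso
        have := h2 ⟨L.length - i, by omega⟩
        have e : i + (L.length - i) = L.length := by omega
        simp only [e, getD_mid] at this
        have hmem := getD_mem _ _ hj
        rw [List.mem_append, List.mem_cons] at hmem
        rcases hmem with h' | h' | h'
        · exact absurd (hL _ h') (by omega)
        · omega
        · exact absurd (hR _ h') (by omega)
      · obtain ⟨c, rfl⟩ : ∃ c, i = L.length + 1 + c := ⟨i - (L.length + 1), by omega⟩
        obtain ⟨d, rfl⟩ : ∃ d, j = L.length + 1 + d := ⟨j - (L.length + 1), by omega⟩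
        simp only [List.length_append, List.length_cons] at hj
        simp only [add_assoc _ c, getD_right] at h1 h2
        exact ⟨c, d, by omega, by omega, h1, h2⟩
  · rintro (⟨i, hi, h⟩ | ⟨i, j, hij, hj, h1, h2⟩)
    · refine ⟨i, L.length, hi, by simp, fun a b => ?_, fun a => ?_⟩
      · rw [← h a b, getD_left _ _ _ _ (by omega), getD_left _ _ _ _ (by omega)]
      · rw [getD_mid, getD_left _ _ _ _ (by omega)]
        exact hL _ (getD_mem _ _ (by omega))
    · refine ⟨L.length + 1 + i, L.length + 1 + j, by omega, by simp; omega, ?_, ?_⟩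
      · simpa only [add_assoc _ i, getD_right] using h1
      · simpa only [add_assoc _ i, getD_right] using h2

/-- words on a finset -/
noncomputable def W (S : Finset ℕ) : Finset (List ℕ) := S.val.lists.toFinset

theorem mem_W (S : Finset ℕ) (l : List ℕ) : l ∈ W S ↔ l.Nodup ∧ l.toFinset = S := by
  unfold W
  rw [Multiset.mem_toFinset, Multiset.mem_lists_iff]
  constructor
  · intro h
    have hn : l.Nodup := by
      have := S.nodup
      rw [h] at this
      exact this
    refine ⟨hn, ?_⟩
    ext x
    rw [List.mem_toFinset, Finset.mem_def, h]; simp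
  · rintro ⟨h, rfl⟩
    simp [List.toFinset_val, h.dedup]

theorem W_length {S : Finset ℕ} {l : List ℕ} (h : l ∈ W S) : l.length = S.card := by
  rw [mem_W] at h
  rw [← h.2, List.toFinset_card_of_nodup h.1]

/-- the word of a permutation on the alphabet `S` -/
noncomputable def word {n : ℕ} (S : Finset ℕ) (h : S.card = n) (π : Equiv.Perm (Fin n)) : List ℕ :=
  List.ofFn (fun i => S.orderEmbOfFin h (π i))

theorem word_length {n : ℕ} (S : Finset ℕ) (h : S.card = n) (π : Equiv.Perm (Fin n)) :
    (word S h π).length = n := by simp [word]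

theorem word_getD {n : ℕ} (S : Finset ℕ) (h : S.card = n) (π : Equiv.Perm (Fin n)) (k : ℕ)
    (hk : k < n) : (word S h π).getD k 0 = S.orderEmbOfFin h (π ⟨k, hk⟩) := by
  rw [List.getD_eq_getElem _ _ (by rw [word_length]; exact hk)]
  simp [word]

theorem word_LC {m n : ℕ} (σ : Equiv.Perm (Fin m)) (S : Finset ℕ) (h : S.card = n)
    (π : Equiv.Perm (Fin n)) : LC σ (word S h π) ↔ ConsecOccurs σ π := by
  unfold LC ConsecOccurs
  refine exists_congr fun i => ?_
  rw [word_length]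
  constructor
  · rintro ⟨hi, h1⟩
    refine ⟨hi, fun a b => ?_⟩
    rw [← h1 a b, word_getD _ _ _ _ (by omega), word_getD _ _ _ _ (by omega)]
    simp
  · rintro ⟨hi, h1⟩
    refine ⟨hi, fun a b => ?_⟩
    rw [← h1 a b, word_getD _ _ _ _ (by omega), word_getD _ _ _ _ (by omega)]
    simp

theorem word_LQ {m n : ℕ} (σ : Equiv.Perm (Fin m)) (S : Finset ℕ) (h : S.card = n)
    (π : Equiv.Perm (Fin n)) : LQ σ (word S h π) ↔ QuasiOccurs σ π := by
  unfold LQ QuasiOccurs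
  refine exists_congr fun i => exists_congr fun j => ?_
  rw [word_length]
  constructor
  · rintro ⟨hi, hj, h1, h2⟩
    refine ⟨hi, hj, fun a b => ?_, fun a => ?_⟩
    · rw [← h1 a b, word_getD _ _ _ _ (by omega), word_getD _ _ _ _ (by omega)]
      simp
    · have := h2 a
      rw [word_getD _ _ _ _ (by omega), word_getD _ _ _ _ (by omega)] at this
      simpa using this
  · rintro ⟨hi, hj, h1, h2⟩
    refine ⟨hi, hj, fun a b => ?_, fun a => ?_⟩
    · rw [← h1 a b, word_getD _ _ _ _ (by omega), word_getD _ _ _ _ (by omega)]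
      simp
    · rw [word_getD _ _ _ _ (by omega), word_getD _ _ _ _ (by omega)]
      simpa using h2 a

theorem word_LD {n : ℕ} (S : Finset ℕ) (h : S.card = n)
    (π : Equiv.Perm (Fin n)) : LD (word S h π) = des π := by
  unfold LD des
  rw [word_length, Finset.card_filter]
  cases n with
  | zero => simp
  | succ n =>
    rw [Fin.sum_univ_castSucc, Nat.add_sub_cancel, Finset.sum_range]
    simp only [Fin.val_last, lt_irrefl, IsEmpty.exists_iff, if_false, add_zero]
    refine Finset.sum_congr rfl fun i _ => ?_
    rw [word_getD _ _ _ _ (by omega), word_getD _ _ _ _ (by omega)]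
    refine if_congr ?_ rfl rfl
    simp
    rfl

theorem word_sum {n : ℕ} (S : Finset ℕ) (h : S.card = n) (F : List ℕ → Polynomial ℚ) :
    ∑ l ∈ W S, F l = ∑ π : Equiv.Perm (Fin n), F (word S h π) := by
  symm
  refine Finset.sum_bij (fun π _ => word S h π) ?_ ?_ ?_ (fun _ _ => rfl)
  · intro π _
    rw [mem_W]
    constructor
    · rw [word, List.nodup_ofFn]
      exact (S.orderEmbOfFin h).injective.comp π.injective
    · ext x
      rw [List.mem_toFinset, word, List.mem_ofFn]
      constructor
      · rintro ⟨i, rfl⟩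
        exact S.orderEmbOfFin_mem h _
      · intro hx
        have : x ∈ Set.range (S.orderEmbOfFin h) := by
          rw [Finset.range_orderEmbOfFin]; exact hx
        obtain ⟨i, rfl⟩ := this
        exact ⟨π.symm i, by simp⟩
  · intro π _ π' _ e
    have := List.ofFn_injective e
    ext i
    have := congrFun this i
    simpa using congrArg Fin.val ((S.orderEmbOfFin h).injective this)
  · intro l hl
    have hlen := (W_length hl).trans h
    rw [mem_W] at hl
    have hex : ∀ i : Fin n, ∃ j, S.orderEmbOfFin h j = l[(i : ℕ)]'(by omega) := by
      intro i
      have : l[(i : ℕ)]'(by omega) ∈ Set.range (S.orderEmbOfFin h) := by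
        rw [Finset.range_orderEmbOfFin, ← hl.2]
        simp
      exact this
    choose f hf using hex
    have hinj : Function.Injective f := by
      intro i j e
      have h1 := hf i
      rw [e, hf j] at h1
      have := (List.Nodup.getElem_inj_iff hl.1).1 h1
      exact Fin.ext this.symm
    refine ⟨Equiv.ofBijective f (Finite.injective_iff_bijective.1 hinj), Finset.mem_univ _, ?_⟩
    refine List.ext_getElem (by rw [word_length, hlen]) fun k h1 h2 => ?_
    simp [word, hf]

theorem cons_eq {m : ℕ} (σ : Equiv.Perm (Fin m)) (S : Finset ℕ) :
    AconsPoly σ S.card = ∑ l ∈ W S, if LC σ l then 0 else Polynomial.X ^ LD l := by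
  rw [word_sum S rfl, AconsPoly, Finset.sum_filter]
  refine Finset.sum_congr rfl fun π _ => ?_
  rw [word_LD, ConsecAvoids, ← word_LC σ S rfl]
  split_ifs <;> simp_all

theorem quasi_eq {m : ℕ} (σ : Equiv.Perm (Fin m)) (S : Finset ℕ) :
    AquasiPoly σ S.card = ∑ l ∈ W S, if LQ σ l then 0 else Polynomial.X ^ LD l := by
  rw [word_sum S rfl, AquasiPoly, Finset.sum_filter]
  refine Finset.sum_congr rfl fun π _ => ?_
  rw [word_LD, QuasiAvoids, ← word_LQ σ S rfl]
  split_ifs <;> simp_all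

theorem W_split (S : Finset ℕ) (M : ℕ) (hM : M ∉ S) (F : List ℕ → Polynomial ℚ) :
    ∑ l ∈ W (insert M S), F l =
      ∑ T ∈ S.powerset, ∑ L ∈ W T, ∑ R ∈ W (S \ T), F (L ++ M :: R) := by
  simp_rw [← Finset.sum_product']
  rw [Finset.sum_sigma']
  symm
  refine Finset.sum_bij (fun x _ => x.2.1 ++ M :: x.2.2) ?_ ?_ ?_ (fun _ _ => rfl)
  · rintro ⟨T, L, R⟩ h
    simp only [Finset.mem_sigma, Finset.mem_powerset, Finset.mem_product, mem_W] at h ⊢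
    obtain ⟨hT, ⟨hL, rfl⟩, hR, hRS⟩ := h
    have hR' : ∀ x, x ∈ R ↔ x ∈ S ∧ x ∉ L := by
      intro x; rw [← List.mem_toFinset, hRS]; simp
    have hL' : ∀ x, x ∈ L → x ∈ S := fun x hx => hT (by simpa using hx)
    constructor
    · rw [List.nodup_append, List.nodup_cons]
      grind
    · ext x
      simp only [List.mem_toFinset, List.mem_append, List.mem_cons, Finset.mem_insert]
      grind
  · rintro ⟨T, L, R⟩ h ⟨T', L', R'⟩ h' e
    simp only [Finset.mem_sigma, Finset.mem_powerset, Finset.mem_product, mem_W] at h h' e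
    obtain ⟨hT, ⟨hL, rfl⟩, hR, hRS⟩ := h
    obtain ⟨hT', ⟨hL', rfl⟩, hR', hRS'⟩ := h'
    have n1 : M ∉ L := fun h => hM (hT (by simpa using h))
    have n2 : M ∉ L' := fun h => hM (hT' (by simpa using h))
    have n3 : M ∉ R := fun h => hM (by
      have : M ∈ R.toFinset := by simpa using h
      rw [hRS] at this; exact (Finset.mem_sdiff.1 this).1)
    obtain ⟨rfl, rfl⟩ : L = L' ∧ R = R' := by
      have := (List.append_cons_inj_of_notMem n1 n3).1 e
      exact ⟨this.1, this.2.2⟩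
    rfl
  · intro l hl
    rw [mem_W] at hl
    have hMl : M ∈ l := by
      rw [← List.mem_toFinset, hl.2]; simp
    obtain ⟨L, R, rfl⟩ := List.append_of_mem hMl
    have hx : ∀ x, (x ∈ L ∨ x = M ∨ x ∈ R) ↔ (x = M ∨ x ∈ S) := by
      intro x
      have := congrArg (fun A => x ∈ A) hl.2
      simp at this
      rw [← this]
      tauto
    have hn := hl.1
    rw [List.nodup_append, List.nodup_cons] at hn
    refine ⟨⟨L.toFinset, L, R⟩, ?_, rfl⟩
    simp only [Finset.mem_sigma, Finset.mem_powerset, Finset.mem_product, mem_W]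
    refine ⟨?_, ⟨hn.1, by first | rfl | simp⟩, hn.2.1.2, ?_⟩
    · intro x hxL
      rw [List.mem_toFinset] at hxL
      grind
    · ext x
      simp only [List.mem_toFinset, Finset.mem_sdiff]
      grind

/-- For every consecutive pattern `σ` of length `k - 1 = m ≥ 1` and the quasi-consecutive
pattern `p = σk`, one has
`A_{n+1}^p(t) = t·∑_{i=0}^{n−1} C(n,i)·A_i^σ(t)·A_{n−i}^p(t) + A_n^σ(t)` for all `n ≥ 0`. -/
theorem statement0 {m : ℕ} (hm : 1 ≤ m) (σ : Equiv.Perm (Fin m)) (n : ℕ) :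
    AquasiPoly σ (n + 1) =
      Polynomial.X *
        (∑ i ∈ Finset.range n,
          (n.choose i : Polynomial ℚ) * (AconsPoly σ i * AquasiPoly σ (n - i))) +
      AconsPoly σ n := by
  have key : AquasiPoly σ (n + 1) = ∑ T ∈ (Finset.range n).powerset,
      (fun i => (if i < n then Polynomial.X else 1) * (AconsPoly σ i * AquasiPoly σ (n - i)))
        T.card := by
    have h0 := quasi_eq σ (insert n (Finset.range n))
    rw [Finset.card_insert_of_notMem (by simp), Finset.card_range, W_split _ _ (by simp)] at h0
    rw [h0]
    refine Finset.sum_congr rfl fun T hT => ?_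
    rw [Finset.mem_powerset] at hT
    have hc : (Finset.range n \ T).card = n - T.card := by
      rw [Finset.card_sdiff_of_subset hT, Finset.card_range]
    simp only []
    rw [← hc, cons_eq, quasi_eq, Finset.sum_mul_sum, Finset.mul_sum]
    refine Finset.sum_congr rfl fun L hL => ?_
    rw [Finset.mul_sum]
    refine Finset.sum_congr rfl fun R hR => ?_
    have hRlen := W_length hR
    rw [mem_W] at hL hR
    have hL' : ∀ x ∈ L, x < n := fun x hx => by
      have : x ∈ T := by rw [← hL.2]; simpa using hx
      simpa using hT this
    have hR' : ∀ x ∈ R, x < n := fun x hx => by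
      have : x ∈ Finset.range n \ T := by rw [← hR.2]; simpa using hx
      simpa using (Finset.mem_sdiff.1 this).1
    rw [LQ_split σ L R n hL' hR', LD_split n R L hL']
    by_cases h1 : LC σ L
    · simp [h1]
    by_cases h2 : LQ σ R
    · simp [h2]
    simp only [h1, h2, or_self, if_false]
    by_cases h3 : R = []
    · subst h3
      have : ¬ T.card < n := by simp at hRlen; omega
      simp [this, LD_single, LD_nil]
    · have : T.card < n := by
        have := List.length_pos_iff.2 h3
        omega
      rw [LD_max n R hR' h3, if_pos this]
      ring
  have hq0 : AquasiPoly σ 0 = 1 := by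
    have h := quasi_eq σ ∅
    rw [Finset.card_empty] at h
    rw [h]
    have : W ∅ = {[]} := by
      ext l
      rw [mem_W]
      simp
      rintro rfl
      simp
    rw [this]
    simp [LQ, LD_nil]
  rw [key, Finset.sum_powerset_apply_card (fun i => (if i < n then Polynomial.X else 1) *
    (AconsPoly σ i * AquasiPoly σ (n - i))), Finset.card_range, Finset.sum_range_succ]
  simp only [lt_irrefl, if_false, Nat.choose_self, Nat.sub_self, hq0, one_smul, one_mul, mul_one]
  congr 1
  rw [Finset.mul_sum]
  refine Finset.sum_congr rfl fun i hi => ?_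
  rw [if_pos (Finset.mem_range.1 hi), nsmul_eq_mul]
  ring
end

section
/- Let σ and σ′ be consecutive patterns on {1,2,…,k−1}. Then σ is des-Wilf-equivalent to σ′ if and only if the quasi-consecutive pattern σk is des-Wilf-equivalent to σ′k. -/
open scoped Classical
open scoped Classical

open Polynomial

section QC
variable {α β : Type} [LinearOrder α] [LinearOrder β]

/-- Descent number of a word. -/
def desL : List α → ℕ
  | [] => 0
  | [_] => 0
  | a :: b :: l => (if b < a then 1 else 0) + desL (b :: l)

/-- The word `w` is an occurrence of the pattern `σ`. -/
def PatL {m : ℕ} (σ : Equiv.Perm (Fin m)) (w : List α) : Prop :=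
  ∃ f : Fin m → α, w = List.ofFn f ∧ ∀ a b, f a < f b ↔ σ a < σ b

def ConsecL {m : ℕ} (σ : Equiv.Perm (Fin m)) (l : List α) : Prop :=
  ∃ X w Y, l = X ++ w ++ Y ∧ PatL σ w

def QuasiL {m : ℕ} (σ : Equiv.Perm (Fin m)) (l : List α) : Prop :=
  ∃ X w Y, l = X ++ w ++ Y ∧ PatL σ w ∧ ∃ x ∈ Y, ∀ y ∈ w, y < x

theorem PatL.ne_nil {m : ℕ} (hm : 1 ≤ m) {σ : Equiv.Perm (Fin m)} {w : List α}
    (h : PatL σ w) : w ≠ [] := by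
  obtain ⟨f, rfl, -⟩ := h
  intro h
  have := congrArg List.length h
  simp at this
  omega

theorem PatL.map_iff {m : ℕ} (σ : Equiv.Perm (Fin m)) (e : α ↪o β) (w : List α) :
    PatL σ (w.map e) ↔ PatL σ w := by
  constructor
  · rintro ⟨f, hf, h⟩
    have hl : w.length = m := by simpa using congrArg List.length hf
    subst hl
    refine ⟨w.get, by simp, fun a b => ?_⟩
    rw [← h]
    have key : ∀ a, f a = e (w.get a) := by
      intro a
      have : (w.map e)[a.1]'(by simp) = (List.ofFn f)[a.1]'(by simp) := by
        simp only [hf]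
      simpa using this.symm
    rw [key, key, e.lt_iff_lt]
  · rintro ⟨f, rfl, h⟩
    refine ⟨e ∘ f, by simp [List.map_ofFn], fun a b => ?_⟩
    simp [h]

theorem ConsecL.map_iff {m : ℕ} (σ : Equiv.Perm (Fin m)) (e : α ↪o β) (l : List α) :
    ConsecL σ (l.map e) ↔ ConsecL σ l := by
  constructor
  · rintro ⟨X, w, Y, h, hp⟩
    obtain ⟨XW, Y', rfl, h1, rfl⟩ := List.map_eq_append_iff.1 h
    obtain ⟨X', w', rfl, rfl, rfl⟩ := List.map_eq_append_iff.1 h1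
    exact ⟨X', w', Y', rfl, (PatL.map_iff σ e _).1 hp⟩
  · rintro ⟨X, w, Y, rfl, hp⟩
    exact ⟨X.map e, w.map e, Y.map e, by simp, (PatL.map_iff σ e _).2 hp⟩

theorem QuasiL.map_iff {m : ℕ} (σ : Equiv.Perm (Fin m)) (e : α ↪o β) (l : List α) :
    QuasiL σ (l.map e) ↔ QuasiL σ l := by
  constructor
  · rintro ⟨X, w, Y, h, hp, x, hx, hxy⟩
    obtain ⟨XW, Y', rfl, h1, rfl⟩ := List.map_eq_append_iff.1 h
    obtain ⟨X', w', rfl, rfl, rfl⟩ := List.map_eq_append_iff.1 h1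
    obtain ⟨x', hx', rfl⟩ := List.mem_map.1 hx
    refine ⟨X', w', Y', rfl, (PatL.map_iff σ e _).1 hp, x', hx', fun y hy => ?_⟩
    exact e.lt_iff_lt.1 (hxy _ (List.mem_map_of_mem hy))
  · rintro ⟨X, w, Y, rfl, hp, x, hx, hxy⟩
    refine ⟨X.map e, w.map e, Y.map e, by simp, (PatL.map_iff σ e _).2 hp, e x,
      List.mem_map_of_mem hx, fun y hy => ?_⟩
    obtain ⟨y', hy', rfl⟩ := List.mem_map.1 hy
    exact e.lt_iff_lt.2 (hxy _ hy')

theorem desL_map (e : α ↪o β) (l : List α) : desL (l.map e) = desL l := by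
  induction l with
  | nil => rfl
  | cons a l ih =>
    cases l with
    | nil => rfl
    | cons b l =>
      simp only [List.map_cons, desL] at ih ⊢
      rw [ih]
      simp

theorem desL_append (A B : List α) (M : α) (hA : ∀ a ∈ A, a < M) (hB : ∀ b ∈ B, b < M) :
    desL (A ++ M :: B) = desL A + (if B = [] then 0 else 1 + desL B) := by
  induction A with
  | nil =>
    cases B with
    | nil => rfl
    | cons b B => simp [desL, hB b]
  | cons a A ih =>
    have ih := ih (fun x hx => hA x (by simp [hx]))
    cases A with
    | nil =>
      have := hA a (by simp)
      simp only [List.cons_append, List.nil_append, desL] at ih ⊢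
      rw [ih, if_neg this.not_gt]
      omega
    | cons a' A =>
      simp only [List.cons_append, desL] at ih ⊢
      rw [ih]
      omega

theorem quasiL_append {m : ℕ} (σ : Equiv.Perm (Fin m)) (hm : 1 ≤ m) (A B : List α) (M : α)
    (hA : ∀ a ∈ A, a < M) (hB : ∀ b ∈ B, b < M) :
    QuasiL σ (A ++ M :: B) ↔ ConsecL σ A ∨ QuasiL σ B := by
  constructor
  · rintro ⟨X, w, Y, h, hp, x, hx, hxy⟩
    have hxM : x ≤ M := by
      have : x ∈ A ++ M :: B := by rw [h]; simp [hx]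
      simp only [List.mem_append, List.mem_cons] at this
      rcases this with h | h | h
      · exact (hA x h).le
      · exact h.le
      · exact (hB x h).le
    have hMw : M ∉ w := fun hw => (hxy M hw).not_ge hxM
    rw [List.append_assoc, List.append_eq_append_iff] at h
    rcases h with ⟨C, rfl, h⟩ | ⟨C, rfl, h⟩
    · -- X = A ++ C
      cases C with
      | nil =>
        obtain ⟨y, w, rfl⟩ := List.exists_cons_of_ne_nil (hp.ne_nil hm)
        simp at h hMw
        exact absurd h.1 hMw.1
      | cons c C =>
        simp only [List.cons_append, List.cons.injEq] at h
        exact Or.inr ⟨C, w, Y, by simp [h.2], hp, x, hx, hxy⟩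
    · -- A = X ++ C
      rw [List.append_eq_append_iff] at h
      rcases h with ⟨D, rfl, h⟩ | ⟨D, rfl, h⟩
      · exact Or.inl ⟨X, w, D, by simp, hp⟩
      · cases D with
        | nil => exact Or.inl ⟨X, C, [], by simp, by simpa using hp⟩
        | cons d D =>
          simp at h hMw
          exact absurd h.1 hMw.2.1
  · rintro (⟨X, w, Y, rfl, hp⟩ | ⟨X, w, Y, rfl, hp, x, hx, hxy⟩)
    · exact ⟨X, w, Y ++ M :: B, by simp, hp, M, by simp, fun y hy => hA y (by simp [hy])⟩
    · exact ⟨A ++ M :: X, w, Y, by simp, hp, x, hx, hxy⟩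

/-- The words using each letter of `S` exactly once. -/
noncomputable def arr (S : Finset α) : Finset (List α) := S.val.lists.toFinset

theorem mem_arr {S : Finset α} {l : List α} : l ∈ arr S ↔ S.val = (l : Multiset α) := by
  simp [arr, Multiset.mem_lists_iff]

/-- The words using each letter of `S` exactly once and satisfying `p`. -/
noncomputable def arrP (p : List α → Prop) (S : Finset α) : Finset (List α) := (arr S).filter p

theorem mem_arrP {p : List α → Prop} {S : Finset α} {l : List α} :
    l ∈ arrP p S ↔ S.val = (l : Multiset α) ∧ p l := by
  simp [arrP, mem_arr]

/-- Descent polynomial of the words on the letter set `S` satisfying `p`. -/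
noncomputable def poly (p : List α → Prop) (S : Finset α) : ℤ[X] :=
  ∑ l ∈ arrP p S, X ^ desL l

theorem poly_map (p : List α → Prop) (p' : List β → Prop) (e : α ↪o β)
    (h : ∀ l, p' (l.map e) ↔ p l) (S : Finset α) :
    poly p' (S.map e.toEmbedding) = poly p S := by
  unfold poly
  symm
  refine Finset.sum_bij (fun l _ => l.map e) ?_ ?_ ?_ ?_
  · intro l hl
    simp only [Finset.mem_filter, mem_arrP] at hl ⊢
    refine ⟨?_, (h l).2 hl.2⟩
    rw [Finset.map_val, hl.1]
    simp
  · intro a _ b _ hab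
    exact List.map_injective_iff.2 e.injective hab
  · intro l hl
    simp only [Finset.mem_filter, mem_arrP] at hl
    have : ∀ x ∈ l, ∃ y, e y = x := by
      intro x hx
      have : x ∈ (S.map e.toEmbedding).val := by rw [hl.1]; simpa using hx
      simp only [Finset.mem_val, Finset.mem_map] at this
      obtain ⟨y, -, hy⟩ := this
      exact ⟨y, hy⟩
    obtain ⟨l', rfl⟩ : l ∈ Set.range (List.map e) := by
      rw [Set.range_list_map]
      exact this
    refine ⟨l', ?_, rfl⟩
    simp only [Finset.mem_filter, mem_arrP]
    refine ⟨?_, (h l').1 hl.2⟩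
    apply Multiset.map_injective e.injective
    have := hl.1
    rw [Finset.map_val] at this
    simpa using this
  · intro l _
    rw [desL_map]

noncomputable def cpoly {m : ℕ} (σ : Equiv.Perm (Fin m)) (n : ℕ) : ℤ[X] :=
  poly (fun l => ¬ ConsecL σ l) (Finset.univ : Finset (Fin n))

noncomputable def qpoly {m : ℕ} (σ : Equiv.Perm (Fin m)) (n : ℕ) : ℤ[X] :=
  poly (fun l => ¬ QuasiL σ l) (Finset.univ : Finset (Fin n))

theorem univ_map_order (S : Finset α) :
    (Finset.univ : Finset (Fin S.card)).map (S.orderEmbOfFin rfl).toEmbedding = S := by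
  ext x
  have := Finset.range_orderEmbOfFin S rfl
  have h2 : x ∈ Set.range (S.orderEmbOfFin rfl) ↔ x ∈ S := by rw [this]; simp
  simpa using h2

theorem poly_consec {m : ℕ} (σ : Equiv.Perm (Fin m)) (S : Finset α) :
    poly (fun l => ¬ ConsecL σ l) S = cpoly σ S.card := by
  conv_lhs => rw [← univ_map_order S]
  exact poly_map _ _ _ (fun l => not_congr (ConsecL.map_iff σ _ l)) _

theorem poly_quasi {m : ℕ} (σ : Equiv.Perm (Fin m)) (S : Finset α) :
    poly (fun l => ¬ QuasiL σ l) S = qpoly σ S.card := by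
  conv_lhs => rw [← univ_map_order S]
  exact poly_map _ _ _ (fun l => not_congr (QuasiL.map_iff σ _ l)) _

theorem qpoly_zero {m : ℕ} (hm : 1 ≤ m) (σ : Equiv.Perm (Fin m)) : qpoly σ 0 = 1 := by
  have : arrP (fun l => ¬ QuasiL σ l) (Finset.univ : Finset (Fin 0)) = {[]} := by
    ext l
    simp only [Finset.mem_filter, mem_arrP, Finset.mem_singleton]
    constructor
    · rintro ⟨h, -⟩
      simpa using h.symm
    · rintro rfl
      refine ⟨by simp, ?_⟩
      rintro ⟨X, w, Y, h, hp, -⟩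
      simp at h
      exact hp.ne_nil hm h.2.1
  rw [qpoly, poly, this]
  simp [desL]

theorem poly_insert {m : ℕ} (hm : 1 ≤ m) (σ : Equiv.Perm (Fin m)) (S : Finset α) (M : α)
    (hM : ∀ x ∈ S, x < M) :
    poly (fun l => ¬ QuasiL σ l) (insert M S) =
      ∑ T ∈ S.powerset, poly (fun l => ¬ ConsecL σ l) T *
        ((if (S \ T).card = 0 then 1 else X) * poly (fun l => ¬ QuasiL σ l) (S \ T)) := by
  have hMS : M ∉ S := fun h => lt_irrefl _ (hM M h)
  have : ∀ T ∈ S.powerset, poly (fun l => ¬ ConsecL σ l) T *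
        ((if (S \ T).card = 0 then 1 else X) * poly (fun l => ¬ QuasiL σ l) (S \ T)) =
      ∑ x ∈ (arrP (fun l => ¬ ConsecL σ l) T) ×ˢ
        (arrP (fun l => ¬ QuasiL σ l) (S \ T)), X ^ desL (x.1 ++ M :: x.2) := by
    intro T hT
    rw [Finset.sum_product, poly, Finset.sum_mul]
    refine Finset.sum_congr rfl fun A hA => ?_
    rw [poly, Finset.mul_sum, Finset.mul_sum]
    refine Finset.sum_congr rfl fun B hB => ?_
    simp only [Finset.mem_filter, mem_arrP, Finset.mem_powerset] at hA hB hT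
    have hAS : ∀ a ∈ A, a < M := by
      intro a ha
      have : a ∈ T.val := by rw [hA.1]; simpa using ha
      exact hM _ (hT this)
    have hBS : ∀ a ∈ B, a < M := by
      intro a ha
      have : a ∈ (S \ T).val := by rw [hB.1]; simpa using ha
      exact hM _ (Finset.sdiff_subset this)
    have hc : (S \ T).card = B.length := by rw [Finset.card_def, hB.1]; simp
    rw [desL_append A B M hAS hBS, hc]
    by_cases hB0 : B = []
    · subst hB0; simp [desL]
    · rw [if_neg hB0, if_neg (by simpa using hB0)]
      ring
  rw [Finset.sum_congr rfl this, Finset.sum_sigma']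
  unfold poly
  symm
  have hlt : ∀ {T : Finset α} {A : List α}, T ⊆ S → T.val = (A : Multiset α) →
      ∀ a ∈ A, a < M := by
    intro T A hT hA a ha
    have : a ∈ T.val := by rw [hA]; simpa using ha
    exact hM _ (hT this)
  refine Finset.sum_bij (fun x _ => x.2.1 ++ M :: x.2.2) ?_ ?_ ?_ ?_
  · rintro ⟨T, A, B⟩ hx
    simp only [Finset.mem_sigma, Finset.mem_product, Finset.mem_filter, mem_arrP,
      Finset.mem_powerset] at hx ⊢
    obtain ⟨hT, ⟨hA, hA'⟩, hB, hB'⟩ := hx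
    refine ⟨?_, ?_⟩
    · rw [Finset.insert_val_of_notMem hMS]
      have : S.val = T.val + (S \ T).val := by
        have := Finset.disjUnion_eq_union T (S \ T) Finset.disjoint_sdiff
        rw [Finset.union_sdiff_of_subset hT] at this
        exact (congrArg Finset.val this).symm
      rw [this, hA, hB]
      simp [List.perm_middle.symm]
    · rw [quasiL_append σ hm A B M (hlt hT hA) (hlt Finset.sdiff_subset hB)]
      tauto
  · rintro ⟨T, A, B⟩ hx ⟨T', A', B'⟩ hx' heq
    simp only [Finset.mem_sigma, Finset.mem_product, Finset.mem_filter, mem_arrP,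
      Finset.mem_powerset] at hx hx' heq
    have h1 : M ∉ A := fun h => lt_irrefl _ (hlt hx.1 hx.2.1.1 M h)
    have h1' : M ∉ B := fun h => lt_irrefl _ (hlt Finset.sdiff_subset hx.2.2.1 M h)
    have h2 : M ∉ A' := fun h => lt_irrefl _ (hlt hx'.1 hx'.2.1.1 M h)
    have : A = A' ∧ B = B' := by
      have := (List.append_cons_inj_of_notMem h1 h1').1 heq
      tauto
    obtain ⟨rfl, rfl⟩ := this
    have : T = T' := Finset.val_injective (hx.2.1.1.trans hx'.2.1.1.symm)
    subst this
    rfl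
  · intro l hl
    simp only [Finset.mem_filter, mem_arrP] at hl
    obtain ⟨hl, hq⟩ := hl
    have hMl : M ∈ l := by
      have : M ∈ (insert M S).val := by simp
      rw [hl] at this
      simpa using this
    obtain ⟨A, B, rfl⟩ := List.append_of_mem hMl
    rw [Finset.insert_val_of_notMem hMS] at hl
    have hS : S.val = (A : Multiset α) + B := by
      have : (M ::ₘ S.val) = M ::ₘ ((A : Multiset α) + B) := by
        rw [hl]; simp
      exact (Multiset.cons_inj_right M).1 this
    have hnd : ((A : Multiset α) + B).Nodup := hS ▸ S.nodup
    have hAn : (A : Multiset α).Nodup := (Multiset.nodup_add.1 hnd).1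
    have hTS : (⟨A, hAn⟩ : Finset α) ⊆ S := by
      intro x hx
      have : x ∈ S.val := by rw [hS]; exact Multiset.mem_add.2 (Or.inl hx)
      exact this
    have hB : (S \ (⟨A, hAn⟩ : Finset α)).val = B := by
      rw [Finset.sdiff_val, hS]
      exact add_tsub_cancel_left _ _
    rw [quasiL_append σ hm A B M (hlt hTS rfl) (hlt Finset.sdiff_subset hB)] at hq
    push Not at hq
    refine ⟨⟨⟨A, hAn⟩, A, B⟩, ?_, rfl⟩
    simp only [Finset.mem_sigma, Finset.mem_product, Finset.mem_filter, mem_arrP,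
      Finset.mem_powerset]
    exact ⟨hTS, ⟨trivial, hq.1⟩, hB, hq.2⟩
  · rintro ⟨T, A, B⟩ hx
    rfl

theorem qpoly_succ {m : ℕ} (hm : 1 ≤ m) (σ : Equiv.Perm (Fin m)) (n : ℕ) :
    qpoly σ (n + 1) = ∑ j ∈ Finset.range (n + 1), n.choose j •
      (cpoly σ j * ((if n - j = 0 then 1 else X) * qpoly σ (n - j))) := by
  have h1 : qpoly σ (n + 1) = poly (fun l => ¬ QuasiL σ l) (insert n (Finset.range n)) := by
    rw [poly_quasi]; simp
  rw [h1, poly_insert hm σ _ _ (fun x hx => Finset.mem_range.1 hx)]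
  have := Finset.sum_powerset_apply_card (x := Finset.range n) (fun j =>
      (cpoly σ j * ((if n - j = 0 then 1 else X) * qpoly σ (n - j))))
  rw [Finset.card_range] at this
  rw [← this]
  refine Finset.sum_congr rfl fun T hT => ?_
  rw [poly_consec, poly_quasi, Finset.card_sdiff_of_subset (Finset.mem_powerset.1 hT),
    Finset.card_range]

theorem main_poly {m : ℕ} (hm : 1 ≤ m) (σ σ' : Equiv.Perm (Fin m)) :
    (∀ n, 1 ≤ n → cpoly σ n = cpoly σ' n) ↔ (∀ n, 1 ≤ n → qpoly σ n = qpoly σ' n) := by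
  have hq0 : qpoly σ 0 = qpoly σ' 0 := by rw [qpoly_zero hm, qpoly_zero hm]
  have hc0 : cpoly σ 0 = cpoly σ' 0 := by
    unfold cpoly poly
    congr 1
    ext l
    simp only [Finset.mem_filter, mem_arrP]
    have : ∀ τ : Equiv.Perm (Fin m), l = [] → ¬ ConsecL τ l := by
      rintro τ rfl ⟨X, w, Y, h, hp⟩
      simp at h
      exact hp.ne_nil hm h.2.1
    have hl : l = [] := by
      cases l with
      | nil => rfl
      | cons a _ => exact a.elim0
    simp [this _ hl]
  constructor
  · intro h n _
    have h : ∀ n, cpoly σ n = cpoly σ' n := by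
      intro n
      rcases Nat.eq_zero_or_pos n with rfl | hn
      · exact hc0
      · exact h n hn
    induction n using Nat.strong_induction_on with
    | _ n ih =>
      have ih : ∀ j < n, qpoly σ j = qpoly σ' j := by
        intro j hj
        rcases Nat.eq_zero_or_pos j with rfl | hj0
        · exact hq0
        · exact ih j hj hj0
      cases n with
      | zero => exact hq0
      | succ n =>
        rw [qpoly_succ hm, qpoly_succ hm]
        refine Finset.sum_congr rfl fun j _ => ?_
        rw [h j, ih (n - j) (by omega)]
  · intro h n _
    have h : ∀ n, qpoly σ n = qpoly σ' n := by
      intro n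
      rcases Nat.eq_zero_or_pos n with rfl | hn
      · exact hq0
      · exact h n hn
    clear * - h hm
    induction n using Nat.strong_induction_on with
    | _ n ih =>
      have h1 := h (n + 1)
      rw [qpoly_succ hm, qpoly_succ hm, Finset.sum_range_succ, Finset.sum_range_succ] at h1
      have h2 : ∑ j ∈ Finset.range n, n.choose j •
          (cpoly σ j * ((if n - j = 0 then 1 else X) * qpoly σ (n - j))) =
          ∑ j ∈ Finset.range n, n.choose j •
          (cpoly σ' j * ((if n - j = 0 then 1 else X) * qpoly σ' (n - j))) := by
        refine Finset.sum_congr rfl fun j hj => ?_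
        rw [h, ih j (Finset.mem_range.1 hj)]
      rw [h2] at h1
      have h3 := add_left_cancel h1
      simpa [qpoly_zero hm] using h3

/-! ### Link between permutations and words -/

theorem desL_ofFn {n : ℕ} (f : Fin n → α) :
    desL (List.ofFn f) = (Finset.univ.filter fun i : Fin n =>
      ∃ h : (i : ℕ) + 1 < n, f ⟨(i : ℕ) + 1, h⟩ < f i).card := by
  induction n with
  | zero => simp [desL]
  | succ n ih =>
    cases n with
    | zero =>
      symm
      rw [List.ofFn_succ, List.ofFn_zero, desL, Finset.card_eq_zero, Finset.filter_eq_empty_iff]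
      rintro i - ⟨h, -⟩
      omega
    | succ n =>
      have h1 := ih (fun i => f i.succ)
      rw [List.ofFn_succ] at h1
      rw [List.ofFn_succ, List.ofFn_succ, desL, h1]
      have e0 : (∃ h : ((0 : Fin (n+2)) : ℕ) + 1 < n + 1 + 1,
          f ⟨((0 : Fin (n+2)) : ℕ) + 1, h⟩ < f 0) ↔ f (Fin.succ 0) < f 0 := by
        constructor
        · rintro ⟨h, h'⟩; exact h'
        · intro h; exact ⟨by simp, h⟩
      have e1 : (Finset.univ.filter fun i : Fin (n+1) =>
          ∃ h : (i : ℕ) + 1 < n + 1, f (Fin.succ ⟨(i : ℕ) + 1, h⟩) < f i.succ) =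
          (Finset.univ.filter ((fun i : Fin (n+1+1) =>
          ∃ h : (i : ℕ) + 1 < n + 1 + 1, f ⟨(i : ℕ) + 1, h⟩ < f i) ∘ Fin.succ)) := by
        ext i
        simp only [Finset.mem_filter, Finset.mem_univ, true_and, Function.comp]
        constructor
        · rintro ⟨h, h'⟩; exact ⟨by simpa using h, h'⟩
        · rintro ⟨h, h'⟩; exact ⟨by simpa using h, h'⟩
      rw [e1, Fin.card_filter_univ_succ (fun i : Fin (n+1+1) =>
          ∃ h : (i : ℕ) + 1 < n + 1 + 1, f ⟨(i : ℕ) + 1, h⟩ < f i)]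
      simp only [Function.comp_def]
      by_cases hc : f (Fin.succ 0) < f 0
      · rw [if_pos hc, if_pos (e0.2 hc)]; omega
      · rw [if_neg hc, if_neg (fun h => hc (e0.1 h))]; omega

theorem ofFn_split {n m i : ℕ} (f : Fin n → α) (h : i + m ≤ n) :
    List.ofFn f = (List.ofFn f).take i ++
      List.ofFn (fun a : Fin m => f ⟨i + (a : ℕ), by have := a.isLt; omega⟩) ++
      (List.ofFn f).drop (i + m) := by
  apply List.ext_getElem
  · simp; omega
  · intro j h1 h2
    simp only [List.getElem_append, List.getElem_take, List.getElem_ofFn, List.getElem_drop,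
      List.length_take, List.length_ofFn, List.length_append]
    split_ifs
    · rfl
    · congr 2; omega
    · congr 2; omega

theorem ofFn_split' {n m : ℕ} {f : Fin n → α} {g : Fin m → α} {U V : List α}
    (h : List.ofFn f = U ++ List.ofFn g ++ V) :
    ∃ hl : U.length + m + V.length = n,
      (∀ a : Fin m, f ⟨U.length + a, by have := a.isLt; omega⟩ = g a) ∧
      ∀ (j : ℕ) (hj : j < V.length), f ⟨U.length + m + j, by omega⟩ = V[j] := by
  have hl : U.length + m + V.length = n := by
    have := congrArg List.length h
    simp at this; omega
  have key : ∀ (j : ℕ) (hj : j < n), f ⟨j, hj⟩ =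
      (U ++ List.ofFn g ++ V)[j]'(by simp; omega) := by
    intro j hj
    have : f ⟨j, hj⟩ = (List.ofFn f)[j]'(by simpa using hj) := by simp
    rw [this]
    simp only [h]
  refine ⟨hl, fun a => ?_, fun j hj => ?_⟩
  · rw [key, List.getElem_append_left (by simp), List.getElem_append_right (by simp)]
    simp
  · rw [key, List.getElem_append_right (by simp)]
    simp

theorem consec_iff {m n : ℕ} (σ : Equiv.Perm (Fin m)) (π : Equiv.Perm (Fin n)) :
    ConsecL σ (List.ofFn π) ↔ ConsecOccurs σ π := by
  constructor
  · rintro ⟨U, w, V, h, f, rfl, hf⟩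
    obtain ⟨hl, h1, -⟩ := ofFn_split' h
    refine ⟨U.length, by omega, fun a b => ?_⟩
    rw [h1, h1, hf]
  · rintro ⟨i, h, hf⟩
    exact ⟨_, _, _, ofFn_split π h, _, rfl, hf⟩

theorem quasi_iff {m n : ℕ} (σ : Equiv.Perm (Fin m)) (π : Equiv.Perm (Fin n)) :
    QuasiL σ (List.ofFn π) ↔ QuasiOccurs σ π := by
  constructor
  · rintro ⟨U, w, V, h, ⟨f, rfl, hf⟩, x, hx, hxy⟩
    obtain ⟨hl, h1, h2⟩ := ofFn_split' h
    obtain ⟨j, hj, rfl⟩ := List.mem_iff_getElem.1 hx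
    refine ⟨U.length, U.length + m + j, by omega, by omega, fun a b => ?_, fun a => ?_⟩
    · rw [h1, h1, hf]
    · rw [h1, h2 j hj]
      exact hxy _ (by simp)
  · rintro ⟨i, j, hij, hj, hf, hlt⟩
    refine ⟨_, _, _, ofFn_split π (by omega : i + m ≤ n), ⟨_, rfl, hf⟩, π ⟨j, hj⟩, ?_, ?_⟩
    · rw [List.mem_iff_getElem]
      refine ⟨j - (i + m), by simp; omega, ?_⟩
      simp only [List.getElem_drop, List.getElem_ofFn]
      congr 2
      omega
    · intro y hy
      rw [List.mem_ofFn] at hy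
      obtain ⟨a, rfl⟩ := hy
      exact hlt a

theorem card_eq_coeff {n : ℕ} (p : List (Fin n) → Prop) (p' : Equiv.Perm (Fin n) → Prop)
    (h : ∀ π : Equiv.Perm (Fin n), p (List.ofFn π) ↔ p' π) (k : ℕ) :
    ((Nat.card {π : Equiv.Perm (Fin n) // p' π ∧ des π = k} : ℕ) : ℤ) =
      (poly p (Finset.univ : Finset (Fin n))).coeff k := by
  have e : poly p (Finset.univ : Finset (Fin n)) =
      ∑ π ∈ (Finset.univ : Finset (Equiv.Perm (Fin n))).filter p', X ^ des π := by
    unfold poly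
    symm
    refine Finset.sum_bij (fun π _ => List.ofFn π) ?_ ?_ ?_ ?_
    · intro π hπ
      simp only [Finset.mem_filter, Finset.mem_univ, true_and, mem_arrP] at hπ ⊢
      refine ⟨?_, (h π).2 hπ⟩
      refine (Multiset.Nodup.ext Finset.univ.nodup ?_).2 ?_
      · exact List.nodup_ofFn.2 π.injective
      · intro a
        simp only [Finset.mem_val, Finset.mem_univ, Multiset.mem_coe, List.mem_ofFn, true_iff]
        exact π.surjective a
    · intro π _ π' _ hh
      exact DFunLike.coe_injective (List.ofFn_injective hh)
    · intro l hl
      simp only [Finset.mem_filter, mem_arrP] at hl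
      have hlen : l.length = n := by
        have := congrArg Multiset.card hl.1
        simpa using this.symm
      have hnd : l.Nodup := by
        have : (l : Multiset (Fin n)).Nodup := hl.1 ▸ Finset.univ.nodup
        exact this
      have hf : l = List.ofFn (fun i : Fin n => l.get (i.cast hlen.symm)) := by
        apply List.ext_getElem
        · simp [hlen]
        · intro i h1 h2
          simp
      have hinj : Function.Injective (fun i : Fin n => l.get (i.cast hlen.symm)) := by
        rw [← List.nodup_ofFn, ← hf]; exact hnd
      let π : Equiv.Perm (Fin n) :=
        Equiv.ofBijective _ ((Finite.injective_iff_bijective).1 hinj)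
      have hπ : List.ofFn π = l := hf.symm
      refine ⟨π, ?_, hπ⟩
      simp only [Finset.mem_filter, Finset.mem_univ, true_and]
      rw [← h, hπ]; exact hl.2
    · intro π _
      rw [desL_ofFn]
      unfold des
      congr!
  rw [e, Polynomial.finset_sum_coeff]
  simp only [Polynomial.coeff_X_pow]
  rw [Finset.sum_boole, Finset.filter_filter, Nat.card_eq_fintype_card, Fintype.card_subtype]
  congr 2
  ext π
  simp [eq_comm]

end QC

theorem statement2 {m : ℕ} (hm : 1 ≤ m) (σ σ' : Equiv.Perm (Fin m)) :
    (∀ n, 1 ≤ n → ∀ k : ℕ,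
        Nat.card {π : Equiv.Perm (Fin n) // ConsecAvoids σ π ∧ des π = k} =
        Nat.card {π : Equiv.Perm (Fin n) // ConsecAvoids σ' π ∧ des π = k}) ↔
    (∀ n, 1 ≤ n → ∀ k : ℕ,
        Nat.card {π : Equiv.Perm (Fin n) // QuasiAvoids σ π ∧ des π = k} =
        Nat.card {π : Equiv.Perm (Fin n) // QuasiAvoids σ' π ∧ des π = k}) := by
  have hc : ∀ (τ : Equiv.Perm (Fin m)) (n k : ℕ),
      ((Nat.card {π : Equiv.Perm (Fin n) // ConsecAvoids τ π ∧ des π = k} : ℕ) : ℤ) =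
        (cpoly τ n).coeff k := fun τ n k =>
    card_eq_coeff _ _ (fun π => not_congr (consec_iff τ π)) k
  have hq : ∀ (τ : Equiv.Perm (Fin m)) (n k : ℕ),
      ((Nat.card {π : Equiv.Perm (Fin n) // QuasiAvoids τ π ∧ des π = k} : ℕ) : ℤ) =
        (qpoly τ n).coeff k := fun τ n k =>
    card_eq_coeff _ _ (fun π => not_congr (quasi_iff τ π)) k
  have := main_poly hm σ σ'
  simp only [Polynomial.ext_iff, ← hc, ← hq, Nat.cast_inj] at this
  exact this
end

section
/- For all n ≥ 0 and all k ≥ 0, the number of permutations π of length n avoiding the quasi-consecutive pattern 3̲2̲1 with des(π) = k equals the number of set partitions Π of {1,…,n} with blk(Π) − sing(Π) = k. -/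
open scoped Classical

/-- `π` avoids the quasi-consecutive pattern 3̲2̲1: there are no (0-indexed) positions
`i` and `j` with `i + 2 ≤ j < n` such that `π_j < π_{i+1} < π_i`. -/
def AvoidsP {n : ℕ} (π : Equiv.Perm (Fin n)) : Prop :=
  ¬ ∃ (i j : ℕ) (hj : j < n) (hij : i + 2 ≤ j),
      π ⟨j, hj⟩ < π ⟨i + 1, by omega⟩ ∧ π ⟨i + 1, by omega⟩ < π ⟨i, by omega⟩

/-- Block-minimum functions. -/
def IsM {n : ℕ} (m : Fin n → Fin n) : Prop := ∀ v, m v ≤ v ∧ m (m v) = m v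

/-- Number of non-singleton fibres. -/
noncomputable def nsM {n : ℕ} (m : Fin n → Fin n) : ℕ :=
  (Finset.univ.filter fun v : Fin n => m v = v ∧ ∃ u, u ≠ v ∧ m u = v).card

/-- Sorting key. -/
noncomputable def keyM {n : ℕ} (m : Fin n → Fin n) (v : Fin n) : ℕ ×ₗ ℕ :=
  toLex ((m v : ℕ), if m v = v then n else (v : ℕ))

/-- The word `π` lists the values by increasing key. -/
def Good {n : ℕ} (m : Fin n → Fin n) (π : Equiv.Perm (Fin n)) : Prop :=
  StrictMono (keyM m ∘ π)

/-- `m` is the suffix minimum function of `π`. -/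
def SufMin {n : ℕ} (m : Fin n → Fin n) (π : Equiv.Perm (Fin n)) : Prop :=
  ∀ p, (∃ q, p ≤ q ∧ π q = m (π p)) ∧ ∀ r, p ≤ r → m (π p) ≤ π r

lemma keyM_lt {n : ℕ} (m : Fin n → Fin n) (u v : Fin n) :
    keyM m u < keyM m v ↔
      m u < m v ∨ (m u = m v ∧ m u ≠ u ∧ (m v = v ∨ u < v)) := by
  unfold keyM
  rw [Prod.Lex.toLex_lt_toLex]
  have hu := u.isLt
  have hv := v.isLt
  simp only [Fin.lt_def, Fin.ext_iff]
  split_ifs <;> omega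

lemma keyM_inj {n : ℕ} (m : Fin n → Fin n) : Function.Injective (keyM m) := by
  intro u v h
  by_contra hne
  have h1 := keyM_lt m u v
  have h2 := keyM_lt m v u
  rw [h] at h1 h2
  simp only [lt_irrefl, false_iff] at h1 h2
  have h3 : m u = m v := by
    have := congrArg (fun x => (ofLex x).1) h
    simpa [keyM, Fin.ext_iff] using this
  rcases lt_or_gt_of_ne hne with h4 | h4 <;> grind

lemma exists_good {n : ℕ} (m : Fin n → Fin n) : ∃ π, Good m π :=
  ⟨Tuple.sort (keyM m), (Tuple.monotone_sort (keyM m)).strictMono_of_injective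
    ((keyM_inj m).comp (Equiv.injective _))⟩

lemma good_unique {n : ℕ} (m : Fin n → Fin n) {π σ : Equiv.Perm (Fin n)}
    (h : Good m π) (h' : Good m σ) : π = σ := by
  have : keyM m ∘ π = keyM m ∘ σ := by
    apply (StrictMono.range_inj h h').1
    simp [Set.range_comp]
  ext x
  have := keyM_inj m (congrFun this x)
  rw [this]

lemma good_lt {n : ℕ} {m : Fin n → Fin n} {π : Equiv.Perm (Fin n)} (h : Good m π)
    {p q : Fin n} : p < q ↔
      m (π p) < m (π q) ∨ (m (π p) = m (π q) ∧ m (π p) ≠ π p ∧ (m (π q) = π q ∨ π p < π q)) := by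
  rw [← keyM_lt]
  exact (StrictMono.lt_iff_lt h).symm

lemma good_sufMin {n : ℕ} {m : Fin n → Fin n} {π : Equiv.Perm (Fin n)} (hm : IsM m)
    (h : Good m π) : SufMin m π := by
  intro p
  refine ⟨⟨π.symm (m (π p)), ?_, by simp⟩, ?_⟩
  · by_contra hlt
    rw [not_le, good_lt h] at hlt
    simp [(hm (π p)).2] at hlt
  · intro r hr
    rcases hr.eq_or_lt with rfl | hr
    · exact (hm _).1
    · rw [good_lt h] at hr
      have := (hm (π r)).1
      rcases hr with hr | hr
      · exact hr.le.trans this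
      · rw [hr.1]; exact this

lemma good_desc {n : ℕ} {m : Fin n → Fin n} {π : Equiv.Perm (Fin n)} (hm : IsM m)
    (h : Good m π) {i j : Fin n} (hij : (j : ℕ) = i + 1) (hd : π j < π i) :
    m (π i) = π j ∧ m (π j) = π j := by
  have hlt : i < j := by rw [Fin.lt_def]; omega
  have hs := good_sufMin hm h
  have hlt' := (good_lt h).1 hlt
  rcases hlt' with h1 | ⟨h1, h2, h3⟩
  · exfalso
    obtain ⟨⟨q, hq, hq'⟩, h5⟩ := hs i
    rcases hq.eq_or_lt with rfl | hq
    · exact absurd ((h1.trans_le (hm (π j)).1)) (by rw [← hq']; exact hd.not_gt)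
    · have : j ≤ q := by rw [Fin.lt_def] at hq; rw [Fin.le_def]; omega
      have := (hs j).2 q this
      rw [hq'] at this
      exact absurd h1 this.not_gt
  · have h4 : m (π j) = π j := h3.resolve_right hd.not_gt
    exact ⟨h1.trans h4, h4⟩

lemma good_avoids {n : ℕ} {m : Fin n → Fin n} {π : Equiv.Perm (Fin n)} (hm : IsM m)
    (h : Good m π) : AvoidsP π := by
  rintro ⟨i, j, hj, hij, h1, h2⟩
  have := good_desc hm h (i := ⟨i, by omega⟩) (j := ⟨i+1, by omega⟩) rfl h2
  have h3 := (good_sufMin hm h ⟨i+1, by omega⟩).2 ⟨j, hj⟩ (by rw [Fin.le_def]; simp; omega)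
  rw [this.2] at h3
  exact absurd h1 h3.not_gt

lemma good_des {n : ℕ} {m : Fin n → Fin n} {π : Equiv.Perm (Fin n)} (hm : IsM m)
    (h : Good m π) : des π = nsM m := by
  unfold des nsM
  apply Finset.card_bij (fun i hi => m (π i))
  · intro i hi
    simp only [Finset.mem_filter, Finset.mem_univ, true_and] at hi ⊢
    obtain ⟨hi, hd⟩ := hi
    have := good_desc hm h (i := i) (j := ⟨i+1, hi⟩) rfl hd
    refine ⟨(hm _).2, π i, ?_, rfl⟩
    rw [this.1]; exact hd.ne'
  · intro i hi j hj hij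
    simp only [Finset.mem_filter, Finset.mem_univ, true_and] at hi hj
    obtain ⟨hi, hd⟩ := hi
    obtain ⟨hj, hd'⟩ := hj
    have h1 := good_desc hm h (i := i) (j := ⟨i+1, hi⟩) rfl hd
    have h2 := good_desc hm h (i := j) (j := ⟨j+1, hj⟩) rfl hd'
    have := π.injective (h1.1.symm.trans (hij.trans h2.1))
    simp [Fin.ext_iff] at this
    exact Fin.ext this
  · intro v hv
    simp only [Finset.mem_filter, Finset.mem_univ, true_and] at hv
    obtain ⟨hv, u, hu, huv⟩ := hv
    obtain ⟨p, rfl⟩ := π.surjective v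
    obtain ⟨q, rfl⟩ := π.surjective u
    have hqp : q < p := (good_lt h).2 (Or.inr ⟨huv.trans hv.symm, by rw [huv]; exact hu.symm, Or.inl hv⟩)
    have hqp' := Fin.lt_def.1 hqp
    have hp := p.isLt
    obtain ⟨r, hr⟩ : ∃ r : Fin n, (r : ℕ) + 1 = p := ⟨⟨p - 1, by omega⟩, by simp; omega⟩
    have hrp : r < p := by rw [Fin.lt_def]; omega
    have hqr : q ≤ r := by rw [Fin.le_def]; omega
    have hmr : m (π r) = π p := by
      apply le_antisymm
      · rcases (good_lt h).1 hrp with h1 | h1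
        · exact h1.le.trans hv.le
        · exact (h1.1.trans hv).le
      · rcases hqr.eq_or_lt with rfl | hqr
        · exact huv.ge
        · rcases (good_lt h).1 hqr with h1 | h1
          · exact huv ▸ h1.le
          · exact (huv.symm.trans h1.1).le
    refine ⟨r, ?_, hmr⟩
    simp only [Finset.mem_filter, Finset.mem_univ, true_and]
    have hpe : (⟨r + 1, by omega⟩ : Fin n) = p := Fin.ext hr
    refine ⟨by omega, ?_⟩
    rw [hpe]
    refine lt_of_le_of_ne (hmr ▸ (hm (π r)).1) ?_
    intro he
    exact hrp.ne' (π.injective he)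

lemma exists_sufMin {n : ℕ} (π : Equiv.Perm (Fin n)) : ∃ m, SufMin m π := by
  have : ∀ v : Fin n, ∃ w, (∃ q, π.symm v ≤ q ∧ π q = w) ∧ ∀ r, π.symm v ≤ r → w ≤ π r := by
    intro v
    obtain ⟨q, hq, hq'⟩ := Finset.exists_min_image (Finset.Ici (π.symm v)) π ⟨_, Finset.mem_Ici.2 le_rfl⟩
    exact ⟨π q, ⟨q, Finset.mem_Ici.1 hq, rfl⟩, fun r hr => hq' r (Finset.mem_Ici.2 hr)⟩
  choose m hm using this
  refine ⟨m, fun p => ?_⟩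
  simpa using hm (π p)

lemma sufMin_unique {n : ℕ} {m m' : Fin n → Fin n} {π : Equiv.Perm (Fin n)}
    (h : SufMin m π) (h' : SufMin m' π) : m = m' := by
  funext v
  obtain ⟨p, rfl⟩ := π.surjective v
  obtain ⟨⟨q, hq, hq'⟩, h2⟩ := h p
  obtain ⟨⟨r, hr, hr'⟩, h3⟩ := h' p
  exact le_antisymm (hr' ▸ h2 r hr) (hq' ▸ h3 q hq)

lemma sufMin_isM {n : ℕ} {m : Fin n → Fin n} {π : Equiv.Perm (Fin n)}
    (h : SufMin m π) : IsM m := by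
  intro v
  obtain ⟨p, rfl⟩ := π.surjective v
  refine ⟨(h p).2 p le_rfl, ?_⟩
  obtain ⟨⟨q, hq, hq'⟩, h2⟩ := h p
  rw [← hq']
  obtain ⟨⟨r, hr, hr'⟩, h3⟩ := h q
  apply le_antisymm (h3 q le_rfl)
  rw [← hr', hq']
  exact h2 r (hq.trans hr)

lemma sufMin_good {n : ℕ} {m : Fin n → Fin n} {π : Equiv.Perm (Fin n)}
    (h : SufMin m π) (ha : AvoidsP π) : Good m π := by
  intro p q hpq
  simp only [Function.comp_apply]
  rw [keyM_lt]
  obtain ⟨⟨r, hr, hr'⟩, h2⟩ := h q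
  have hle : m (π p) ≤ m (π q) := hr' ▸ (h p).2 r (hpq.le.trans hr)
  rcases hle.lt_or_eq with hlt | heq
  · exact Or.inl hlt
  refine Or.inr ⟨heq, ?_, ?_⟩
  · rw [heq, ← hr']
    intro he
    exact (hpq.trans_le hr).ne' (π.injective he)
  · rcases hr.eq_or_lt with rfl | hqr
    · exact Or.inl hr'.symm
    right
    have key : ∀ j : ℕ, (p : ℕ) + 1 ≤ j → ∀ hj : j ≤ q, π p < π ⟨j, by omega⟩ := by
      have step : ∀ i : ℕ, (p : ℕ) ≤ i → ∀ hi : i + 1 ≤ q,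
          π ⟨i, by omega⟩ < π ⟨i + 1, by omega⟩ := by
        intro i hpi hi
        by_contra hcon
        have hri : (r : ℕ) > i + 1 := by have := Fin.lt_def.1 hqr; omega
        refine ha ⟨i, r, r.isLt, by omega, ?_, ?_⟩
        · refine lt_of_le_of_ne ?_ ?_
          · change π r ≤ _
            rw [hr', ← heq]
            exact (h p).2 _ (by rw [Fin.le_def]; simp; omega)
          · intro he
            have := congrArg Fin.val (π.injective he)
            simp at this
            omega
        · refine lt_of_le_of_ne (not_lt.1 hcon) ?_
          intro he
          have := congrArg Fin.val (π.injective he)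
          simp at this
      intro j hj
      induction j, hj using Nat.le_induction with
      | base => intro hj; exact step p le_rfl hj
      | succ j hj ih => intro hj'; exact (ih (by omega)).trans (step j (by omega) hj')
    exact key q (Fin.lt_def.1 hpq) le_rfl

lemma card_perm {n k : ℕ} :
    Nat.card {π : Equiv.Perm (Fin n) // AvoidsP π ∧ des π = k} =
      Nat.card {m : Fin n → Fin n // IsM m ∧ nsM m = k} := by
  symm
  choose f hf using exists_good (n := n)
  refine Nat.card_eq_of_bijective
    (fun m => ⟨f m.1, good_avoids m.2.1 (hf m.1), (good_des m.2.1 (hf m.1)).trans m.2.2⟩) ⟨?_, ?_⟩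
  · rintro ⟨m, hm, hk⟩ ⟨m', hm', hk'⟩ he
    simp only [Subtype.mk.injEq] at he ⊢
    exact sufMin_unique (good_sufMin hm (hf m)) (he ▸ good_sufMin hm' (hf m'))
  · rintro ⟨π, ha, hd⟩
    obtain ⟨m, hm⟩ := exists_sufMin π
    have hM := sufMin_isM hm
    have hg := sufMin_good hm ha
    refine ⟨⟨m, hM, (good_des hM hg).symm.trans hd⟩, ?_⟩
    simp only [Subtype.mk.injEq]
    exact good_unique m (hf m) hg

/-- `m` is the block minimum function of `P`. -/
def BlkMin {n : ℕ} (P : Finpartition (Finset.univ : Finset (Fin n))) (m : Fin n → Fin n) : Prop :=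
  ∀ v, m v ∈ P.part v ∧ ∀ u ∈ P.part v, m v ≤ u

lemma exists_blkMin {n : ℕ} (P : Finpartition (Finset.univ : Finset (Fin n))) :
    ∃ m, BlkMin P m := by
  have : ∀ v, ∃ w, w ∈ P.part v ∧ ∀ u ∈ P.part v, w ≤ u := by
    intro v
    exact Finset.exists_min_image (P.part v) id ⟨v, P.mem_part (Finset.mem_univ v)⟩
  choose m hm using this
  exact ⟨m, hm⟩

lemma blk_part {n : ℕ} {P : Finpartition (Finset.univ : Finset (Fin n))} {u v : Fin n}
    (h : u ∈ P.part v) : P.part u = P.part v :=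
  P.part_eq_of_mem (P.part_mem.2 (Finset.mem_univ v)) h

lemma blkMin_mem {n : ℕ} {P : Finpartition (Finset.univ : Finset (Fin n))} {m : Fin n → Fin n}
    (h : BlkMin P m) {u v : Fin n} : u ∈ P.part v ↔ m u = m v := by
  constructor
  · intro hu
    have := blk_part hu
    apply le_antisymm
    · exact (h u).2 _ (this ▸ (h v).1)
    · exact (h v).2 _ (this ▸ (h u).1)
  · intro he
    have h1 := blk_part (h u).1
    have h2 := blk_part (h v).1
    rw [← h2, ← he, h1]
    exact P.mem_part (Finset.mem_univ u)

lemma blkMin_isM {n : ℕ} {P : Finpartition (Finset.univ : Finset (Fin n))} {m : Fin n → Fin n}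
    (h : BlkMin P m) : IsM m := fun v =>
  ⟨(h v).2 v (P.mem_part (Finset.mem_univ v)), (blkMin_mem h).1 (h v).1⟩

lemma blkMin_inj {n : ℕ} {P Q : Finpartition (Finset.univ : Finset (Fin n))} {m : Fin n → Fin n}
    (h : BlkMin P m) (h' : BlkMin Q m) : P = Q := by
  have hp : ∀ v, P.part v = Q.part v := by
    intro v; ext u; rw [blkMin_mem h, blkMin_mem h']
  have aux : ∀ (P Q : Finpartition (Finset.univ : Finset (Fin n))),
      (∀ v, P.part v = Q.part v) → ∀ b ∈ P.parts, b ∈ Q.parts := by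
    intro P Q hp b hb
    obtain ⟨v, hv⟩ := P.nonempty_of_mem_parts hb
    rw [← P.part_eq_of_mem hb hv, hp]
    exact Q.part_mem.2 (Finset.mem_univ v)
  ext b
  exact ⟨aux P Q hp b, aux Q P (fun v => (hp v).symm) b⟩

lemma exists_part {n : ℕ} {m : Fin n → Fin n} (hm : IsM m) :
    ∃ P : Finpartition (Finset.univ : Finset (Fin n)), BlkMin P m := by
  classical
  refine ⟨Finpartition.ofSetoid (Setoid.ker m), fun v => ?_⟩
  simp only [Finpartition.mem_part_ofSetoid_iff_rel, Setoid.ker_def]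
  refine ⟨(hm v).2.symm, fun u hu => hu ▸ (hm u).1⟩

lemma blkMin_count {n : ℕ} {P : Finpartition (Finset.univ : Finset (Fin n))} {m : Fin n → Fin n}
    (h : BlkMin P m) :
    P.parts.card - (P.parts.filter fun b => b.card = 1).card = nsM m := by
  have hM := blkMin_isM h
  have h1 := Finset.card_filter_add_card_filter_not (s := P.parts) (fun b => b.card = 1)
  have h2 : (P.parts.filter fun b => ¬ b.card = 1).card = nsM m := by
    symm
    unfold nsM
    apply Finset.card_bij (fun v _ => P.part v)
    · intro v hv
      simp only [Finset.mem_filter, Finset.mem_univ, true_and] at hv ⊢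
      obtain ⟨hv, u, hu, huv⟩ := hv
      refine ⟨P.part_mem.2 (Finset.mem_univ v), fun hc => ?_⟩
      obtain ⟨a, ha⟩ := Finset.card_eq_one.1 hc
      have h3 : u ∈ P.part v := (blkMin_mem h).2 (huv.trans hv.symm)
      have h4 : v ∈ P.part v := P.mem_part (Finset.mem_univ v)
      rw [ha, Finset.mem_singleton] at h3 h4
      exact hu (h3.trans h4.symm)
    · intro v hv u hu he
      simp only [Finset.mem_filter, Finset.mem_univ, true_and] at hv hu
      have : v ∈ P.part u := he ▸ P.mem_part (Finset.mem_univ v)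
      rw [blkMin_mem h, hv.1, hu.1] at this
      exact this
    · intro b hb
      simp only [Finset.mem_filter] at hb
      obtain ⟨hb, hc⟩ := hb
      obtain ⟨w, hw⟩ := P.nonempty_of_mem_parts hb
      have hbw := P.part_eq_of_mem hb hw
      have hbm : P.part (m w) = b := (blk_part (h w).1).trans hbw
      refine ⟨m w, ?_, hbm⟩
      simp only [Finset.mem_filter, Finset.mem_univ, true_and]
      refine ⟨(hM w).2, ?_⟩
      by_contra hcon
      push Not at hcon
      apply hc
      rw [Finset.card_eq_one]
      refine ⟨m w, ?_⟩
      ext u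
      rw [Finset.mem_singleton, ← hbw, blkMin_mem h]
      constructor
      · intro hu
        by_contra hne
        exact hcon u hne hu
      · rintro rfl
        exact (hM w).2
  omega

lemma card_part {n k : ℕ} :
    Nat.card {P : Finpartition (Finset.univ : Finset (Fin n)) //
        P.parts.card - (P.parts.filter fun b => b.card = 1).card = k} =
      Nat.card {m : Fin n → Fin n // IsM m ∧ nsM m = k} := by
  choose f hf using exists_blkMin (n := n)
  refine Nat.card_eq_of_bijective
    (fun P => ⟨f P.1, blkMin_isM (hf P.1), (blkMin_count (hf P.1)).symm.trans P.2⟩) ⟨?_, ?_⟩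
  · rintro ⟨P, hP⟩ ⟨Q, hQ⟩ he
    simp only [Subtype.mk.injEq] at he ⊢
    exact blkMin_inj (hf P) (he ▸ hf Q)
  · rintro ⟨m, hm, hk⟩
    obtain ⟨P, hP⟩ := exists_part hm
    refine ⟨⟨P, (blkMin_count hP).trans hk⟩, ?_⟩
    simp only [Subtype.mk.injEq]
    funext v
    exact le_antisymm ((hf P v).2 _ (hP v).1) ((hP v).2 _ (hf P v).1)

/-- For all `n ≥ 0` and `k ≥ 0`, the number of permutations of length `n` avoiding the
quasi-consecutive pattern 3̲2̲1 with `des(π) = k` equals the number of set partitions `Π`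
of `{1,…,n}` with `blk(Π) − sing(Π) = k`. -/
theorem statement9 (n k : ℕ) :
    Nat.card {π : Equiv.Perm (Fin n) // AvoidsP π ∧ des π = k} =
      Nat.card {P : Finpartition (Finset.univ : Finset (Fin n)) //
        P.parts.card - (P.parts.filter fun b => b.card = 1).card = k} := by
  rw [card_perm, card_part]
end

section
/- For all n ≥ 1 and all 0 ≤ k ≤ n−1, the number of permutations of length n avoiding the quasi-consecutive pattern 3̲1̲2 with exactly k descents, and likewise the number of permutations of length n avoiding the quasi-consecutive pattern 1̲3̲2 with exactly k descents, both equal the Narayana number N_{n,k} = (1/(k+1))·binom(n,k)·binom(n−1,k). -/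
open scoped Classical

/-- `π` avoids the quasi-consecutive pattern 3̲1̲2: there are no (0-indexed) positions
`i` and `j` with `i + 2 ≤ j < n` such that `π_{i+1} < π_j < π_i`. -/
def AvoidsP312 {n : ℕ} (π : Equiv.Perm (Fin n)) : Prop :=
  ¬ ∃ (i j : ℕ) (hj : j < n) (hij : i + 2 ≤ j),
      π ⟨i + 1, by omega⟩ < π ⟨j, hj⟩ ∧ π ⟨j, hj⟩ < π ⟨i, by omega⟩

/-- `π` avoids the quasi-consecutive pattern 1̲3̲2: there are no (0-indexed) positions
`i` and `j` with `i + 2 ≤ j < n` such that `π_i < π_j < π_{i+1}`. -/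
def AvoidsP132 {n : ℕ} (π : Equiv.Perm (Fin n)) : Prop :=
  ¬ ∃ (i j : ℕ) (hj : j < n) (hij : i + 2 ≤ j),
      π ⟨i, by omega⟩ < π ⟨j, hj⟩ ∧ π ⟨j, hj⟩ < π ⟨i + 1, by omega⟩


namespace QC

/-- Prepend the value `a` to `σ`, shifting the values `≥ a` up by one. -/
noncomputable def ins {n : ℕ} (a : Fin (n + 1)) (σ : Equiv.Perm (Fin n)) :
    Equiv.Perm (Fin (n + 1)) :=
  Equiv.ofBijective (Fin.cons a (fun i => a.succAbove (σ i)) : Fin (n + 1) → Fin (n + 1)) (by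
    apply Finite.injective_iff_bijective.1
    rw [Fin.cons_injective_iff]
    refine ⟨?_, ?_⟩
    · rintro ⟨i, hi⟩
      exact Fin.succAbove_ne a _ hi
    · exact (Fin.succAbove_right_injective).comp σ.injective)

lemma ins_zero {n : ℕ} (a : Fin (n + 1)) (σ : Equiv.Perm (Fin n)) : ins a σ 0 = a := by
  simp [ins]

lemma ins_succ {n : ℕ} (a : Fin (n + 1)) (σ : Equiv.Perm (Fin n)) (i : Fin n) :
    ins a σ i.succ = a.succAbove (σ i) := by
  simp [ins]

lemma ins_bij (n : ℕ) : Function.Bijective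
    (fun p : Fin (n + 1) × Equiv.Perm (Fin n) => ins p.1 p.2) := by
  rw [Fintype.bijective_iff_injective_and_card]
  constructor
  · rintro ⟨a, σ⟩ ⟨b, τ⟩ h
    simp only at h
    have hab : a = b := by rw [← ins_zero a σ, h, ins_zero]
    subst hab
    congr 1
    ext i : 1
    have := congrArg (fun e => e i.succ) h
    simp only [ins_succ] at this
    exact Fin.succAbove_right_injective this
  · simp [Fintype.card_perm, Nat.factorial_succ]

lemma avoids_iff {n : ℕ} (π : Equiv.Perm (Fin n)) : AvoidsP132 π ↔
    ∀ i i' j : Fin n, (i' : ℕ) = i + 1 → (i' : ℕ) < j → π i < π j → π j < π i' → False := by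
  unfold AvoidsP132
  constructor
  · intro h i i' j h1 h2 h3 h4
    apply h
    have hlt : (i : ℕ) + 1 < n := by omega
    have e : i' = ⟨(i : ℕ) + 1, hlt⟩ := Fin.ext h1
    rw [e] at h4
    exact ⟨i, j, j.2, by omega, h3, h4⟩
  · rintro h ⟨i, j, hj, hij, h3, h4⟩
    exact h ⟨i, by omega⟩ ⟨i + 1, by omega⟩ ⟨j, hj⟩ rfl (by simp; omega) h3 h4

lemma ins_avoids {n : ℕ} (a : Fin (n + 2)) (σ : Equiv.Perm (Fin (n + 1))) :
    AvoidsP132 (ins a σ) ↔ AvoidsP132 σ ∧ (σ 0 : ℕ) ≤ a := by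
  rw [avoids_iff, avoids_iff]
  constructor
  · intro h
    constructor
    · intro i i' j h1 h2 h3 h4
      apply h i.succ i'.succ j.succ (by simp [h1]) (by simpa using h2)
      · rw [ins_succ, ins_succ]; exact (Fin.succAbove_lt_succAbove_iff).2 h3
      · rw [ins_succ, ins_succ]; exact (Fin.succAbove_lt_succAbove_iff).2 h4
    · by_contra hlt
      push Not at hlt
      have ha : (a : ℕ) < n + 1 := by have := (σ 0).2; omega
      -- the value `a` of `σ`
      let c : Fin (n + 1) := ⟨a, ha⟩
      have hc : a.succAbove c = c.succ := by
        apply Fin.succAbove_of_le_castSucc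
        simp [c, Fin.le_def]
      obtain ⟨j, hj⟩ := σ.surjective c
      have hj0 : j ≠ 0 := by
        rintro rfl
        rw [hj] at hlt
        simp [c] at hlt
      have hj0' : (j : ℕ) ≠ 0 := fun h => hj0 (Fin.ext h)
      apply h 0 (Fin.succ 0) j.succ (by simp) (by simp only [Fin.val_succ, Fin.val_zero]; omega)
      · rw [ins_zero, ins_succ, hj, hc, Fin.lt_def]; simp [c]
      · rw [ins_succ, ins_succ, Fin.succAbove_lt_succAbove_iff, hj]
        exact hlt
  · rintro ⟨h, h0⟩ i i' j h1 h2 h3 h4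
    obtain ⟨j, rfl⟩ := Fin.exists_succ_eq.2 (show j ≠ 0 by rintro rfl; simp at h2)
    obtain ⟨i', rfl⟩ := Fin.exists_succ_eq.2 (show i' ≠ 0 by rintro rfl; simp at h1)
    rcases Fin.eq_zero_or_eq_succ i with rfl | ⟨i, rfl⟩
    · have : i' = 0 := by apply Fin.ext; simpa using h1
      subst this
      rw [ins_zero, ins_succ] at h3
      rw [ins_succ, ins_succ, Fin.succAbove_lt_succAbove_iff] at h4
      rw [Fin.lt_succAbove_iff_le_castSucc] at h3
      rw [Fin.le_def] at h3
      rw [Fin.lt_def] at h4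
      simp at h3
      omega
    · simp only [ins_succ, Fin.succAbove_lt_succAbove_iff] at h3 h4
      exact h i i' j (by simpa using h1) (by simpa using h2) h3 h4

lemma des_eq {n : ℕ} (π : Equiv.Perm (Fin (n + 1))) :
    des π = ∑ i : Fin n, if π i.succ < π i.castSucc then 1 else 0 := by
  unfold des
  rw [Finset.card_filter, Fin.sum_univ_castSucc]
  simp
  rfl

lemma ins_des {n : ℕ} (a : Fin (n + 2)) (σ : Equiv.Perm (Fin (n + 1))) :
    des (ins a σ) = des σ + if (σ 0 : ℕ) < a then 1 else 0 := by
  rw [des_eq, des_eq, Fin.sum_univ_succ, add_comm]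
  congr 1
  · apply Finset.sum_congr rfl
    intro i _
    rw [← Fin.succ_castSucc, ins_succ, ins_succ]
    simp only [Fin.succAbove_lt_succAbove_iff]
  · rw [Fin.castSucc_zero, ins_succ, ins_zero]
    simp only [Fin.succAbove_lt_iff_castSucc_lt]
    rfl

/-- number of avoiders of length `n+1` with first value `a` and `k` descents -/
noncomputable def c (n a k : ℕ) : ℕ :=
  (Finset.univ.filter fun π : Equiv.Perm (Fin (n + 1)) =>
    AvoidsP132 π ∧ des π = k ∧ (π 0 : ℕ) = a).card

lemma c_large (n a k : ℕ) (h : n < a) : c n a k = 0 := by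
  unfold c
  rw [Finset.card_eq_zero, Finset.filter_eq_empty_iff]
  rintro π - ⟨-, -, h3⟩
  have := (π 0).2
  omega

lemma c_succ' (n a k : ℕ) (ha : a ≤ n + 1) : c (n + 1) a k =
    (Finset.univ.filter fun σ : Equiv.Perm (Fin (n + 1)) =>
    (AvoidsP132 σ ∧ (σ 0 : ℕ) ≤ a) ∧ (des σ + if (σ 0 : ℕ) < a then 1 else 0) = k).card := by
  unfold c
  symm
  apply Finset.card_bij (fun σ _ => ins ⟨a, by omega⟩ σ)
  · intro σ hσ
    simp only [Finset.mem_filter, Finset.mem_univ, true_and] at hσ ⊢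
    rw [ins_avoids, ins_des, ins_zero]
    exact ⟨hσ.1, hσ.2, rfl⟩
  · intro σ _ τ _ h
    have := (ins_bij (n + 1)).1 (a₁ := (_, σ)) (a₂ := (_, τ)) h
    exact (Prod.ext_iff.1 this).2
  · intro π hπ
    simp only [Finset.mem_filter, Finset.mem_univ, true_and] at hπ
    obtain ⟨⟨b, σ⟩, rfl⟩ := (ins_bij (n + 1)).2 π
    simp only [ins_avoids, ins_des, ins_zero] at hπ
    obtain ⟨h1, h2, rfl⟩ := hπ
    exact ⟨σ, by simpa using ⟨h1, h2⟩, rfl⟩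

lemma c_zero (k : ℕ) : c 0 0 k = if k = 0 then 1 else 0 := by
  unfold c
  have : ∀ π : Equiv.Perm (Fin (0 + 1)),
      (AvoidsP132 π ∧ des π = k ∧ (π 0 : ℕ) = 0) ↔ k = 0 := by
    intro π
    rw [avoids_iff, des_eq]
    simp [eq_comm]
  simp only [this]
  split_ifs with h <;> simp [h]

lemma sum_c (n k A : ℕ) : ∑ b ∈ Finset.range A, c n b k =
    (Finset.univ.filter fun π : Equiv.Perm (Fin (n + 1)) =>
    AvoidsP132 π ∧ des π = k ∧ (π 0 : ℕ) < A).card := by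
  rw [Finset.card_eq_sum_card_fiberwise (f := fun π => (π 0 : ℕ)) (t := Finset.range A)]
  · apply Finset.sum_congr rfl
    intro b hb
    unfold c
    rw [Finset.filter_filter]
    congr 1
    apply Finset.filter_congr
    intro π _
    simp at hb
    constructor
    · rintro ⟨h1, h2, h3⟩; exact ⟨⟨h1, h2, by omega⟩, h3⟩
    · rintro ⟨⟨h1, h2, _⟩, h3⟩; exact ⟨h1, h2, h3⟩
  · intro π hπ
    simp at hπ ⊢
    exact hπ.2.2

lemma c_succ_zero (n a : ℕ) (ha : a ≤ n + 1) : c (n + 1) a 0 = c n a 0 := by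
  rw [c_succ' n a 0 ha, c]
  congr 1
  apply Finset.filter_congr
  intro π _
  constructor
  · rintro ⟨⟨h1, h2⟩, h3⟩
    split_ifs at h3 <;> exact ⟨h1, by omega, by omega⟩
  · rintro ⟨h1, h2, h3⟩
    simp [h1, h2, h3]

lemma c_succ_succ (n a k : ℕ) (ha : a ≤ n + 1) : c (n + 1) a (k + 1) =
    c n a (k + 1) + ∑ b ∈ Finset.range a, c n b k := by
  rw [c_succ' n a _ ha, sum_c, c, ← Finset.card_union_of_disjoint, ← Finset.filter_or]
  · congr 1
    apply Finset.filter_congr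
    intro π _
    constructor
    · rintro ⟨⟨h1, h2⟩, h3⟩
      split_ifs at h3
      · right; exact ⟨h1, by omega, by omega⟩
      · left; exact ⟨h1, by omega, by omega⟩
    · rintro (⟨h1, h2, h3⟩ | ⟨h1, h2, h3⟩)
      · simp [h1, h2, h3]
      · simp [h1, h2, h3, h3.le]
  · rw [Finset.disjoint_filter]
    rintro π - ⟨_, _, _⟩ ⟨_, _, _⟩
    omega

/-- closed form for `c` -/
def g (n : ℕ) : ℕ → ℕ → ℤ
  | 0, k => if k = 0 then 1 else 0
  | _ + 1, 0 => 0
  | A + 1, k + 1 => A.choose k * n.choose (k + 1) - A.choose (k + 1) * n.choose k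

/-- closed form for the partial sums of `c` -/
def H (n A : ℕ) : ℕ → ℤ
  | 0 => 1
  | k + 1 => A.choose (k + 1) * n.choose (k + 1) - A.choose (k + 2) * n.choose k

lemma sum_g (n k A : ℕ) : ∑ b ∈ Finset.range (A + 1), g n b k = H n A k := by
  induction A with
  | zero => cases k <;> simp [g, H]
  | succ A ih =>
    rw [Finset.sum_range_succ, ih]
    cases k with
    | zero => simp [g, H]
    | succ k =>
      simp only [g, H, Nat.choose_succ_succ A]
      push_cast
      ring

lemma c_eq (n : ℕ) : ∀ a k, a ≤ n + 1 → (c n a k : ℤ) = g n a k := by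
  have top : ∀ n k, g n (n + 1) k = 0 := by
    intro n k
    cases k <;> simp [g]
    ring
  induction n with
  | zero =>
    intro a k ha
    rcases Nat.eq_zero_or_pos a with rfl | h
    · rw [c_zero]; simp [g]
    · obtain rfl : a = 0 + 1 := by omega
      rw [c_large _ _ _ (by omega), top]; rfl
  | succ n ih =>
    intro a k ha
    rcases Nat.lt_or_ge (n + 1) a with h | h
    · obtain rfl : a = n + 1 + 1 := by omega
      rw [c_large _ _ _ (by omega), top]; rfl
    cases k with
    | zero =>
      rw [c_succ_zero n a h, ih a 0 h]
      cases a <;> simp [g]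
    | succ k =>
      rw [c_succ_succ n a k h]
      push_cast
      rw [ih a _ h, Finset.sum_congr rfl
        (fun b hb => ih b k (by have := Finset.mem_range.1 hb; omega))]
      cases a with
      | zero => simp [g]
      | succ A =>
        rw [sum_g]
        cases k with
        | zero => simp [g, H]; ring
        | succ k =>
          simp only [g, H, Nat.choose_succ_succ n]
          push_cast
          ring

lemma count132 (n k : ℕ) :
    (Nat.card {π : Equiv.Perm (Fin (n + 1)) // AvoidsP132 π ∧ des π = k} : ℤ) = H n n k := by
  rw [← sum_g, ← Finset.sum_congr rfl
    (fun b hb => c_eq n b k (by have := Finset.mem_range.1 hb; omega))]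
  rw [← Nat.cast_sum, sum_c, Nat.card_eq_fintype_card, Fintype.card_subtype]
  congr 2
  apply Finset.filter_congr
  intro π _
  have := (π 0).2
  simp only [this, and_true]

lemma H_symm (n k : ℕ) (hk : k ≤ n) : H n n (n - k) = H n n k := by
  have key : ∀ i j, i + j = n → n.choose i = n.choose j := by
    intro i j h
    apply Nat.choose_symm_of_eq_add; omega
  obtain ⟨m, rfl⟩ := Nat.exists_eq_add_of_le hk
  rw [Nat.add_sub_cancel_left]
  rcases k with _ | k <;> rcases m with _ | m
  · rfl
  · simp [H]
  · simp [H]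
  · simp only [H]
    rw [key (m + 1) (k + 1) (by omega), key (m + 2) k (by omega), key m (k + 2) (by omega)]
    ring

lemma H_formula (n k : ℕ) : (H n n k : ℚ) =
    (1 / (k + 1 : ℚ)) * ((n + 1).choose k : ℚ) * (n.choose k : ℚ) := by
  rcases k with _ | k
  · simp [H]
  · have h2 : ((n.choose (k + 2) : ℚ)) * (k + 2) = n.choose (k + 1) * (n - (k + 1)) := by
      rcases Nat.lt_or_ge n (k + 1) with h | h
      · simp [Nat.choose_eq_zero_of_lt h, Nat.choose_eq_zero_of_lt (show n < k + 2 by omega)]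
      · have := Nat.choose_succ_right_eq n (k + 1)
        have h' := congrArg (Nat.cast (R := ℚ)) this
        push_cast [h] at h'
        linear_combination h'
    have h1 : ((n.choose (k + 1) : ℚ)) * (k + 1) = n.choose k * (n - k) := by
      rcases Nat.lt_or_ge n k with h | h
      · simp [Nat.choose_eq_zero_of_lt h, Nat.choose_eq_zero_of_lt (show n < k + 1 by omega)]
      · have := Nat.choose_succ_right_eq n k
        have h' := congrArg (Nat.cast (R := ℚ)) this
        push_cast [h] at h'
        linear_combination h'
    have h0 : ((k : ℚ) + 1 + 1) ≠ 0 := by positivity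
    simp only [H, Nat.choose_succ_succ n]
    push_cast
    field_simp
    have e := Nat.choose_succ_succ n k
    linear_combination (-(n.choose k : ℚ)) * h2 + (n.choose (k + 1) : ℚ) * h1

/-- complement -/
def compl {n : ℕ} : Equiv.Perm (Fin n) ≃ Equiv.Perm (Fin n) :=
  Equiv.mulLeft (Fin.revPerm)

lemma compl_apply {n : ℕ} (π : Equiv.Perm (Fin n)) (i : Fin n) :
    compl π i = (π i).rev := by
  simp [compl]

lemma compl_avoids {n : ℕ} (π : Equiv.Perm (Fin n)) :
    AvoidsP312 π ↔ AvoidsP132 (compl π) := by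
  unfold AvoidsP312 AvoidsP132
  simp only [compl_apply, Fin.rev_lt_rev]
  simp only [and_comm]

lemma compl_des {n : ℕ} (π : Equiv.Perm (Fin (n + 1))) :
    des π + des (compl π) = n := by
  rw [des_eq, des_eq, ← Finset.sum_add_distrib]
  simp only [compl_apply, Fin.rev_lt_rev]
  have : ∀ i : Fin n, ((if π i.succ < π i.castSucc then 1 else 0) +
      (if π i.castSucc < π i.succ then 1 else 0) : ℕ) = 1 := by
    intro i
    have hne : π i.succ ≠ π i.castSucc := by
      intro h
      have := congrArg Fin.val (π.injective h)
      simp at this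
    rcases lt_or_gt_of_ne hne with h | h
    · simp [h, h.not_gt]
    · simp [h, h.not_gt]
  simp [this]

lemma count312 (n k : ℕ) (hk : k ≤ n) :
    (Nat.card {π : Equiv.Perm (Fin (n + 1)) // AvoidsP312 π ∧ des π = k} : ℤ) = H n n k := by
  rw [← H_symm n k hk, ← count132]
  congr 1
  apply Nat.card_congr
  apply Equiv.subtypeEquiv compl
  intro π
  rw [compl_avoids]
  have := compl_des π
  constructor
  · rintro ⟨h1, h2⟩; exact ⟨h1, by omega⟩
  · rintro ⟨h1, h2⟩; exact ⟨h1, by omega⟩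

end QC

/-- For all `n ≥ 1` and `0 ≤ k ≤ n − 1`, the number of permutations of length `n`
avoiding 3̲1̲2 (respectively 1̲3̲2) with exactly `k` descents equals the Narayana number
`N_{n,k} = (1/(k+1))·C(n,k)·C(n−1,k)`. -/
theorem statement11 (n : ℕ) (hn : 1 ≤ n) (k : ℕ) (hk : k ≤ n - 1) :
    (Nat.card {π : Equiv.Perm (Fin n) // AvoidsP312 π ∧ des π = k} : ℚ) =
        (1 / (k + 1 : ℚ)) * (n.choose k : ℚ) * ((n - 1).choose k : ℚ) ∧
    (Nat.card {π : Equiv.Perm (Fin n) // AvoidsP132 π ∧ des π = k} : ℚ) =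
        (1 / (k + 1 : ℚ)) * (n.choose k : ℚ) * ((n - 1).choose k : ℚ) := by
  obtain ⟨m, rfl⟩ : ∃ m, n = m + 1 := ⟨n - 1, by omega⟩
  rw [Nat.add_sub_cancel] at hk ⊢
  rw [← QC.H_formula]
  constructor
  · rw [← QC.count312 m k hk]; simp
  · rw [← QC.count132 m k]; simp
end

section
/- The quasi-consecutive patterns 3̲1̲2̲4 and 2̲3̲1̲4 are des-Wilf-equivalent: for all n ≥ 1 and k ≥ 0, the number of permutations of length n avoiding 3̲1̲2̲4 with exactly k descents equals the number of permutations of length n avoiding 2̲3̲1̲4 with exactly k descents. -/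
open scoped Classical

/-- `π` avoids the quasi-consecutive pattern 3̲1̲2̲4: there are no (0-indexed) positions
`i` and `j` with `i + 3 ≤ j < n` such that π_{i+1} < π_{i+2} < π_i < π_j. -/
def AvoidsA {n : ℕ} (π : Equiv.Perm (Fin n)) : Prop :=
  ¬ ∃ (i j : ℕ) (hj : j < n) (hij : i + 3 ≤ j), π ⟨i + 1, by omega⟩ < π ⟨i + 2, by omega⟩ ∧ π ⟨i + 2, by omega⟩ < π ⟨i, by omega⟩ ∧ π ⟨i, by omega⟩ < π ⟨j, hj⟩

/-- `π` avoids the quasi-consecutive pattern 2̲3̲1̲4: there are no (0-indexed) positions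
`i` and `j` with `i + 3 ≤ j < n` such that π_{i+2} < π_i < π_{i+1} < π_j. -/
def AvoidsB {n : ℕ} (π : Equiv.Perm (Fin n)) : Prop :=
  ¬ ∃ (i j : ℕ) (hj : j < n) (hij : i + 3 ≤ j), π ⟨i + 2, by omega⟩ < π ⟨i, by omega⟩ ∧ π ⟨i, by omega⟩ < π ⟨i + 1, by omega⟩ ∧ π ⟨i + 1, by omega⟩ < π ⟨j, hj⟩

namespace QC

variable {α : Type} [LinearOrder α]

/-- consecutive avoidance of a ternary relation -/
def Con (P : α → α → α → Prop) : List α → Prop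
  | a :: b :: c :: t => ¬ P a b c ∧ Con P (b :: c :: t)
  | _ => True

/-- quasi-consecutive avoidance -/
def QC (P : α → α → α → Prop) (f : α → α → α) : List α → Prop
  | a :: b :: c :: t => (P a b c → ∀ d ∈ t, ¬ f a b < d) ∧ QC P f (b :: c :: t)
  | _ => True

open Classical in
noncomputable def dl (r : α → α → Prop) : List α → ℕ
  | a :: b :: t => (if r a b then 1 else 0) + dl r (b :: t)
  | _ => 0

def PA (a b c : α) : Prop := b < c ∧ c < a
def PB (a b c : α) : Prop := c < a ∧ a < b
def fA (a _b : α) : α := a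
def fB (_a b : α) : α := b

theorem con_iff (P : α → α → α → Prop) (l : List α) :
    Con P l ↔ ∀ a b c, [a, b, c] <:+: l → ¬ P a b c := by
  induction l with
  | nil => simp [Con]
  | cons x t ih =>
    match t, ih with
    | [], _ =>
      simp only [Con, true_iff]
      intro a b c h; have := h.length_le; simp at this
    | [y], _ =>
      simp only [Con, true_iff]
      intro a b c h; have := h.length_le; simp at this
    | y :: z :: t, ih =>
      simp only [Con]
      rw [ih]
      constructor
      · rintro ⟨h1, h2⟩ a b c h
        rw [List.infix_cons_iff] at h
        rcases h with h | h
        · simp only [List.cons_prefix_cons] at h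
          obtain ⟨rfl, rfl, rfl, -⟩ := h
          exact h1
        · exact h2 a b c h
      · intro h
        refine ⟨h _ _ _ ⟨[], t, by simp⟩, fun a b c h' => h a b c (List.infix_cons h')⟩

noncomputable def co (S : Finset α) (x : α) : α :=
  if h : x ∈ S then S.orderIsoOfFin rfl (Fin.rev ((S.orderIsoOfFin rfl).symm ⟨x, h⟩)) else x

theorem co_mem (S : Finset α) {x : α} (h : x ∈ S) : co S x ∈ S := by
  simp only [co, h, dif_pos]; exact Subtype.coe_prop _

theorem co_co (S : Finset α) {x : α} (h : x ∈ S) : co S (co S x) = x := by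
  have h2 := co_mem S h
  rw [co, dif_pos h2]
  have : (⟨co S x, h2⟩ : S) = S.orderIsoOfFin rfl (Fin.rev ((S.orderIsoOfFin rfl).symm ⟨x, h⟩)) := by
    apply Subtype.ext; simp only [co, h, dif_pos]
  rw [this]; simp

theorem co_lt (S : Finset α) {x y : α} (hx : x ∈ S) (hy : y ∈ S) : co S x < co S y ↔ y < x := by
  simp only [co, hx, hy, dif_pos]
  rw [Subtype.coe_lt_coe, OrderIso.lt_iff_lt, Fin.rev_lt_rev, OrderIso.lt_iff_lt]
  simp

noncomputable def rc (l : List α) : List α := (l.map (co l.toFinset)).reverse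

theorem rc_toFinset (l : List α) : (rc l).toFinset = l.toFinset := by
  ext x
  simp only [rc, List.toFinset_reverse, List.mem_toFinset, List.mem_map]
  constructor
  · rintro ⟨y, hy, rfl⟩
    have := co_mem l.toFinset (List.mem_toFinset.2 hy)
    exact List.mem_toFinset.1 this
  · intro h
    have h := List.mem_toFinset.2 h
    exact ⟨co l.toFinset x, List.mem_toFinset.1 (co_mem _ h), co_co _ h⟩

theorem mem_rc (l : List α) (x : α) : x ∈ rc l ↔ x ∈ l := by
  rw [← List.mem_toFinset, rc_toFinset, List.mem_toFinset]

theorem rc_rc (l : List α) : rc (rc l) = l := by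
  rw [rc, rc_toFinset, rc, List.map_reverse, List.reverse_reverse, List.map_map]
  conv_rhs => rw [← List.map_id l]
  apply List.map_congr_left
  intro x hx
  exact co_co _ (List.mem_toFinset.2 hx)

theorem rc_length (l : List α) : (rc l).length = l.length := by simp [rc]

theorem rc_nodup {l : List α} (h : l.Nodup) : (rc l).Nodup := by
  rw [rc, List.nodup_reverse]
  apply List.Nodup.map_on _ h
  intro x hx y hy hxy
  rw [← co_co l.toFinset (List.mem_toFinset.2 hx), hxy, co_co l.toFinset (List.mem_toFinset.2 hy)]

theorem infix_rc {l : List α} {a b c : α} (h : [a, b, c] <:+: rc l) :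
    [co l.toFinset c, co l.toFinset b, co l.toFinset a] <:+: l := by
  have h1 : [c, b, a] <:+: l.map (co l.toFinset) := by
    rw [← List.reverse_infix]; simpa [rc] using h
  have h2 := h1.map (co l.toFinset)
  have h3 : (l.map (co l.toFinset)).map (co l.toFinset) = l := by
    rw [List.map_map]
    conv_rhs => rw [← List.map_id l]
    apply List.map_congr_left
    intro x hx
    exact co_co _ (List.mem_toFinset.2 hx)
  rw [h3] at h2
  exact h2

theorem con_rc_aux {P Q : α → α → α → Prop} {l : List α}
    (hPQ : ∀ a ∈ l, ∀ b ∈ l, ∀ c ∈ l, Q a b c →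
      P (co l.toFinset c) (co l.toFinset b) (co l.toFinset a))
    (h : Con P l) : Con Q (rc l) := by
  rw [con_iff] at h ⊢
  intro a b c habc hQ
  have hs := habc.subset
  refine h _ _ _ (infix_rc habc) (hPQ a ?_ b ?_ c ?_ hQ) <;>
  · rw [← mem_rc]; apply hs; simp

theorem con_rcA {l : List α} (h : Con PA l) : Con PB (rc l) := by
  apply con_rc_aux _ h
  intro a ha b hb c hc
  rw [← List.mem_toFinset] at ha hb hc
  simp only [PA, PB, co_lt _ ha hb, co_lt _ hb ha, co_lt _ hc ha, co_lt _ ha hc, co_lt _ hb hc,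
    co_lt _ hc hb]
  tauto

theorem con_rcB {l : List α} (h : Con PB l) : Con PA (rc l) := by
  apply con_rc_aux _ h
  intro a ha b hb c hc
  rw [← List.mem_toFinset] at ha hb hc
  simp only [PA, PB, co_lt _ ha hb, co_lt _ hb ha, co_lt _ hc ha, co_lt _ ha hc, co_lt _ hb hc,
    co_lt _ hc hb]
  tauto

theorem dl_append (r : α → α → Prop) (L : List α) (m : α) (R : List α) :
    dl r (L ++ m :: R) = dl r (L ++ [m]) + dl r (m :: R) := by
  induction L with
  | nil => simp [dl]
  | cons a t ih =>
    cases t with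
    | nil => simp [dl]
    | cons b t => simp only [List.cons_append, dl] at ih ⊢; rw [ih, add_assoc]

theorem dl_reverse (r : α → α → Prop) (l : List α) :
    dl r l.reverse = dl (fun a b => r b a) l := by
  induction l with
  | nil => simp [dl]
  | cons a t ih =>
    cases t with
    | nil => simp [dl]
    | cons b t =>
      have : (a :: b :: t).reverse = t.reverse ++ b :: [a] := by simp
      rw [this, dl_append]
      have h2 : t.reverse ++ [b] = (b :: t).reverse := by simp
      rw [h2, ih]
      simp [dl, add_comm]

theorem dl_map (r s : α → α → Prop) (f : α → α) (l : List α)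
    (h : ∀ a ∈ l, ∀ b ∈ l, (r (f a) (f b) ↔ s a b)) : dl r (l.map f) = dl s l := by
  induction l with
  | nil => simp [dl]
  | cons a t ih =>
    cases t with
    | nil => simp [dl]
    | cons b t =>
      have := ih (fun x hx y hy => h x (by simp [hx]) y (by simp [hy]))
      simp only [List.map_cons, dl] at this ⊢
      rw [this]
      simp only [h a (by simp) b (by simp)]

theorem dl_rc (l : List α) : dl (fun a b => b < a) (rc l) = dl (fun a b => b < a) l := by
  rw [rc, dl_reverse]
  apply dl_map
  intro a ha b hb
  exact co_lt _ (List.mem_toFinset.2 ha) (List.mem_toFinset.2 hb)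

theorem dl_snoc (L : List α) (m : α) (h : ∀ x ∈ L, x < m) :
    dl (fun a b => b < a) (L ++ [m]) = dl (fun a b => b < a) L := by
  induction L with
  | nil => simp [dl]
  | cons a t ih =>
    cases t with
    | nil =>
      have := h a (by simp)
      simp [dl, this.le]
    | cons b t =>
      have := ih (fun x hx => h x (by simp [hx]))
      simp only [List.cons_append, dl] at this ⊢; rw [this]

theorem qc_split (P : α → α → α → Prop) (f : α → α → α) (L : List α) (m : α) (R : List α)
    (hL : ∀ x ∈ L, x < m) (hR : ∀ x ∈ R, x < m)
    (hf : ∀ a b, f a b = a ∨ f a b = b)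
    (hc : ∀ a b, a < m → b < m → ¬ P a b m)
    (hb : ∀ a c, a < m → P a m c → f a m = m)
    (ha : ∀ b c, b < m → P m b c → f m b = m) :
    QC P f (L ++ m :: R) ↔ Con P L ∧ QC P f R := by
  induction L with
  | nil =>
    match R with
    | [] => simp [QC, Con]
    | [y] => simp [QC, Con]
    | y :: z :: t =>
      simp only [List.nil_append, QC, Con, true_and, and_iff_right_iff_imp]
      intro _ hP d hd
      rw [ha y z (hR y (by simp)) hP]
      exact (hR d (by simp [hd])).le.not_gt
  | cons a t ih =>
    have ih := ih (fun x hx => hL x (by simp [hx]))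
    match t, ih with
    | [], ih =>
      simp only [List.nil_append, List.cons_append, Con] at ih ⊢
      rw [← ih]
      match R with
      | [] => simp [QC]
      | y :: t =>
        simp only [QC, and_iff_right_iff_imp]
        intro _ hP d hd
        rw [hb a y (hL a (by simp)) hP]
        exact (hR d (by simp [hd])).le.not_gt
    | [b], ih =>
      simp only [List.nil_append, List.cons_append, Con] at ih ⊢
      rw [← ih]
      simp only [QC, and_iff_right_iff_imp]
      intro _ hP
      exact absurd hP (hc a b (hL a (by simp)) (hL b (by simp)))
    | b :: c :: t, ih =>
      simp only [List.cons_append, Con, QC] at ih ⊢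
      rw [ih, and_assoc]
      apply and_congr_left
      intro _
      constructor
      · intro h hP
        refine h hP m (by simp) ?_
        rcases hf a b with e | e <;> rw [e] <;> apply hL <;> simp
      · intro h hP; exact absurd hP h

theorem qcA_split (L : List α) (m : α) (R : List α)
    (hL : ∀ x ∈ L, x < m) (hR : ∀ x ∈ R, x < m) :
    QC PA fA (L ++ m :: R) ↔ Con PA L ∧ QC PA fA R := by
  apply qc_split _ _ _ _ _ hL hR
  · intro a b; simp [fA]
  · rintro a b h1 h2 ⟨h3, h4⟩; exact absurd h4 h1.not_gt
  · rintro a c h1 ⟨h3, h4⟩; exact absurd (h3.trans h4) h1.not_gt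
  · intros; rfl

theorem qcB_split (L : List α) (m : α) (R : List α)
    (hL : ∀ x ∈ L, x < m) (hR : ∀ x ∈ R, x < m) :
    QC PB fB (L ++ m :: R) ↔ Con PB L ∧ QC PB fB R := by
  apply qc_split _ _ _ _ _ hL hR
  · intro a b; simp [fB]
  · rintro a b h1 h2 ⟨h3, h4⟩; exact absurd h3 h1.not_gt
  · intros; rfl
  · rintro a c h1 ⟨h3, h4⟩; exact absurd h4 h1.not_gt

open Classical in
noncomputable def aux : List α → List α → List α
  | acc, [] => acc
  | acc, a :: t => if ∀ x ∈ t, x < a then rc acc ++ a :: aux [] t else aux (acc ++ [a]) t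

theorem aux_split (acc L : List α) (m : α) (R : List α)
    (hL : ∀ x ∈ L, x < m) (hR : ∀ x ∈ R, x < m) :
    aux acc (L ++ m :: R) = rc (acc ++ L) ++ m :: aux [] R := by
  induction L generalizing acc with
  | nil => simp only [List.nil_append, aux, if_pos hR, List.append_nil]
  | cons a t ih =>
    rw [List.cons_append, aux, if_neg, ih _ (fun x hx => hL x (by simp [hx]))]
    · simp
    · intro h
      exact (h m (by simp)).not_gt (hL a (by simp))

noncomputable def Phi (l : List α) : List α := aux [] l

theorem Phi_split (L : List α) (m : α) (R : List α)
    (hL : ∀ x ∈ L, x < m) (hR : ∀ x ∈ R, x < m) :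
    Phi (L ++ m :: R) = rc L ++ m :: Phi R := by
  rw [Phi, aux_split _ _ _ _ hL hR]; simp [Phi]

theorem split_ind (motive : List α → Prop) (h0 : motive [])
    (h1 : ∀ L m R, (∀ x ∈ L, x < m) → (∀ x ∈ R, x < m) → L.Nodup → R.Nodup →
      (∀ x ∈ L, x ∉ R) → motive R → motive (L ++ m :: R))
    (l : List α) (hl : l.Nodup) : motive l := by
  induction hn : l.length using Nat.strong_induction_on generalizing l with
  | _ n ih =>
    by_cases hnil : l = []
    · rw [hnil]; exact h0
    · obtain ⟨m, hm, hmax⟩ := l.toFinset.exists_max_image id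
        (by simpa [List.toFinset_nonempty_iff] using hnil)
      obtain ⟨L, R, rfl⟩ := List.append_of_mem (List.mem_toFinset.1 hm)
      have hmax' : ∀ x ∈ L ++ m :: R, x ≤ m := fun x hx => hmax x (List.mem_toFinset.2 hx)
      rw [List.nodup_append] at hl
      obtain ⟨n1, n2, n3⟩ := hl
      rw [List.nodup_cons] at n2
      refine h1 L m R (fun x hx => lt_of_le_of_ne (hmax' x (by simp [hx])) (n3 x hx m (by simp)))
        (fun x hx => lt_of_le_of_ne (hmax' x (by simp [hx])) ?_) n1 n2.2 ?_ ?_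
      · rintro rfl; exact n2.1 hx
      · intro x hx hx'; exact n3 x hx x (by simp [hx']) rfl
      · exact ih R.length (by rw [← hn]; simp; omega) R n2.2 rfl

theorem Phi_main (l : List α) (hl : l.Nodup) :
    (∀ x, x ∈ Phi l ↔ x ∈ l) ∧ (Phi l).Nodup ∧ (Phi l).length = l.length ∧ Phi (Phi l) = l ∧
    (QC PA fA l → QC PB fB (Phi l)) ∧ (QC PB fB l → QC PA fA (Phi l)) ∧
    dl (fun a b => b < a) (Phi l) = dl (fun a b => b < a) l := by
  revert l
  apply split_ind
  · simp [Phi, aux, QC]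
  · intro L m R hL hR nL nR hd ih
    obtain ⟨i1, i2, i3, i4, i5, i6, i7⟩ := ih
    have hL' : ∀ x ∈ rc L, x < m := fun x hx => hL x ((mem_rc L x).1 hx)
    have hR' : ∀ x ∈ Phi R, x < m := fun x hx => hR x ((i1 x).1 hx)
    rw [Phi_split L m R hL hR, Phi_split _ m _ hL' hR', rc_rc, i4,
      qcA_split L m R hL hR, qcA_split _ m _ hL' hR',
      qcB_split L m R hL hR, qcB_split _ m _ hL' hR']
    refine ⟨fun x => by simp [mem_rc, i1], ?_, by simp [rc_length, i3], rfl,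
      fun h => ⟨con_rcA h.1, i5 h.2⟩, fun h => ⟨con_rcB h.1, i6 h.2⟩, ?_⟩
    · rw [List.nodup_append, List.nodup_cons]
      refine ⟨rc_nodup nL, ⟨fun h => (hR' m h).false, i2⟩, ?_⟩
      intro a ha b hb hab
      subst hab
      rcases List.mem_cons.1 hb with e | e
      · exact (hL' a ha).ne e
      · exact hd a ((mem_rc L a).1 ha) ((i1 a).1 e)
    · rw [dl_append, dl_append _ L, dl_snoc _ _ hL, dl_snoc _ _ hL', dl_rc]
      congr 1
      have key : ∀ S : List α, (∀ x ∈ S, x < m) →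
          dl (fun a b => b < a) (m :: S) =
            (if S.length = 0 then 0 else 1) + dl (fun a b => b < a) S := by
        intro S hS
        cases S with
        | nil => simp [dl]
        | cons y t => simp [dl, hS y (by simp)]
      rw [key _ hR, key _ hR', i3, i7]

theorem qc_index (P : α → α → α → Prop) (f : α → α → α) (l : List α) :
    QC P f l ↔ ∀ (i j : ℕ) (hj : j < l.length) (hij : i + 3 ≤ j),
      P (l[i]'(by omega)) (l[i+1]'(by omega)) (l[i+2]'(by omega)) →
        ¬ f (l[i]'(by omega)) (l[i+1]'(by omega)) < l[j] := by
  induction l with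
  | nil => simp [QC]
  | cons x t ih =>
    match t, ih with
    | [], _ =>
      simp only [QC, true_iff]
      intro i j hj hij; simp at hj; omega
    | [y], _ =>
      simp only [QC, true_iff]
      intro i j hj hij; simp at hj; omega
    | y :: z :: t, ih =>
      simp only [QC]
      rw [ih]
      constructor
      · rintro ⟨h1, h2⟩ i j hj hij
        obtain ⟨j, rfl⟩ : ∃ j', j = j' + 3 := ⟨j - 3, by omega⟩
        cases i with
        | zero =>
          intro hP
          exact h1 hP _ (List.getElem_mem (by simpa using hj))
        | succ i => exact h2 i (j + 2) (by simpa using hj) (by omega)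
      · intro h
        constructor
        · intro hP d hd
          obtain ⟨j, hj, rfl⟩ := List.getElem_of_mem hd
          exact h 0 (j + 3) (by simpa using hj) (by omega) hP
        · intro i j hj hij
          exact h (i + 1) (j + 1) (by simpa using hj) (by omega)

theorem dl_ofFn {n : ℕ} (g : Fin n → α) :
    (Finset.univ.filter fun i : Fin n => ∃ h : (i : ℕ) + 1 < n, g ⟨(i : ℕ) + 1, h⟩ < g i).card =
      dl (fun a b => b < a) (List.ofFn g) := by
  induction n with
  | zero => simp [dl]
  | succ n ih =>
    cases n with
    | zero =>
      simp only [List.ofFn_succ, List.ofFn_zero, dl]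
      rw [Finset.card_eq_zero, Finset.filter_eq_empty_iff]
      rintro i - ⟨h, -⟩
      omega
    | succ n =>
      rw [Fin.card_filter_univ_succ]
      have := ih (fun i => g i.succ)
      rw [List.ofFn_succ] at this ⊢
      rw [List.ofFn_succ]
      simp only [dl]
      rw [← this]
      have e1 : (∃ h : ((0 : Fin (n+2)) : ℕ) + 1 < n + 1 + 1,
        g ⟨((0 : Fin (n+2)) : ℕ) + 1, h⟩ < g 0) ↔ g (Fin.succ 0) < g 0 :=
        ⟨fun ⟨_, h⟩ => h, fun h => ⟨by simp, h⟩⟩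
      have e2 : ∀ i : Fin (n+1), (∃ h : ((i.succ : Fin (n+2)) : ℕ) + 1 < n + 1 + 1,
        g ⟨((i.succ : Fin (n+2)) : ℕ) + 1, h⟩ < g i.succ) ↔
        (∃ h : (i : ℕ) + 1 < n + 1, g (Fin.succ ⟨(i : ℕ) + 1, h⟩) < g i.succ) := by
        intro i
        exact ⟨fun ⟨h, h'⟩ => ⟨by simpa using h, h'⟩, fun ⟨h, h'⟩ => ⟨by simpa using h, h'⟩⟩
      simp only [e2]
      by_cases h : g (Fin.succ 0) < g 0
      · rw [if_pos (e1.2 h), if_pos h, add_comm]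
      · rw [if_neg (fun h' => h (e1.1 h')), if_neg h, zero_add]

end QC

open QC in
theorem avoidsA_iff {n : ℕ} (π : Equiv.Perm (Fin n)) :
    AvoidsA π ↔ QC.QC PA fA (List.ofFn π) := by
  rw [qc_index, AvoidsA]
  push Not
  simp only [List.getElem_ofFn, PA, fA, List.length_ofFn]
  constructor
  · intro h i j hj hij hP
    exact h i j hj hij hP.1 hP.2
  · intro h i j hj hij h1 h2
    exact h i j hj hij ⟨h1, h2⟩

open QC in
theorem avoidsB_iff {n : ℕ} (π : Equiv.Perm (Fin n)) :
    AvoidsB π ↔ QC.QC PB fB (List.ofFn π) := by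
  rw [qc_index, AvoidsB]
  push Not
  simp only [List.getElem_ofFn, PB, fB, List.length_ofFn]
  constructor
  · intro h i j hj hij hP
    exact h i j hj hij hP.1 hP.2
  · intro h i j hj hij h1 h2
    exact h i j hj hij ⟨h1, h2⟩

theorem exists_perm {n : ℕ} (l : List (Fin n)) (h : l.Nodup) (hl : l.length = n) :
    ∃ π : Equiv.Perm (Fin n), List.ofFn π = l := by
  have hinj : Function.Injective (fun i : Fin n => l.get (Fin.cast hl.symm i)) := by
    intro i j hij
    have := h.injective_get hij
    simpa using this
  refine ⟨Equiv.ofBijective _ (Finite.injective_iff_bijective.1 hinj), ?_⟩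
  apply List.ext_getElem
  · simp [hl]
  · intro i h1 h2
    simp

/-- The quasi-consecutive patterns 3̲1̲2̲4 and 2̲3̲1̲4 are des-Wilf-equivalent. -/
theorem statement12 (n : ℕ) (hn : 1 ≤ n) (k : ℕ) :
    Nat.card {π : Equiv.Perm (Fin n) // AvoidsA π ∧ des π = k} =
      Nat.card {π : Equiv.Perm (Fin n) // AvoidsB π ∧ des π = k} := by
  have main : ∀ π : Equiv.Perm (Fin n), _ := fun π =>
    QC.Phi_main (List.ofFn π) (List.nodup_ofFn.2 π.injective)
  have ex : ∀ π : Equiv.Perm (Fin n), ∃ σ : Equiv.Perm (Fin n),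
      List.ofFn σ = QC.Phi (List.ofFn π) := fun π =>
    exists_perm _ (main π).2.1 (by rw [(main π).2.2.1, List.length_ofFn])
  choose F hF using ex
  have hdes : ∀ π, des (F π) = des π := by
    intro π
    have := (main π).2.2.2.2.2.2
    rw [← hF, ← QC.dl_ofFn, ← QC.dl_ofFn] at this
    unfold des
    convert this
  have hinv : Function.Involutive F := by
    intro π
    have : List.ofFn (F (F π)) = List.ofFn π := by
      rw [hF, hF, (main π).2.2.2.1]
    exact DFunLike.coe_injective (List.ofFn_injective this)
  have hAB : ∀ π, AvoidsA π → AvoidsB (F π) := by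
    intro π h
    rw [avoidsB_iff, hF]
    exact (main π).2.2.2.2.1 ((avoidsA_iff π).1 h)
  have hBA : ∀ π, AvoidsB π → AvoidsA (F π) := by
    intro π h
    rw [avoidsA_iff, hF]
    exact (main π).2.2.2.2.2.1 ((avoidsB_iff π).1 h)
  refine Nat.card_congr ((hinv.toPerm F).subtypeEquiv ?_)
  intro π
  show _ ↔ AvoidsB (F π) ∧ des (F π) = k
  rw [hdes]
  refine and_congr_left fun _ => ⟨hAB π, fun h => ?_⟩
  have := hBA _ h
  rwa [hinv π] at this
end

section
/- The joint distribution of descents and inversions agrees on avoiders of 3̲1̲2̲4 and of 2̲3̲1̲4: for all n ≥ 1, k ≥ 0 and m ≥ 0, the number of permutations π of length n avoiding 3̲1̲2̲4 with des(π) = k and inv(π) = m equals the number of permutations π of length n avoiding 2̲3̲1̲4 with des(π) = k and inv(π) = m. -/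
open scoped Classical

/-- The number of inversions of a permutation of `Fin n`. -/
def inversions {n : ℕ} (π : Equiv.Perm (Fin n)) : ℕ :=
  (Finset.univ.filter fun p : Fin n × Fin n => p.1 < p.2 ∧ π p.2 < π p.1).card

namespace S13

section lists

variable {α : Type} [LinearOrder α]

/-- Order-reversing involution of a finite set `S`. -/
noncomputable def flip (S : Finset α) (x : α) : α :=
  if h : x ∈ S then
    ((S.orderIsoOfFin rfl) (Fin.rev ((S.orderIsoOfFin rfl).symm ⟨x, h⟩)) : α) else x

theorem flip_mem {S : Finset α} {x : α} (h : x ∈ S) : flip S x ∈ S := by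
  unfold flip
  rw [dif_pos h]
  exact Subtype.property _

theorem flip_flip {S : Finset α} {x : α} (h : x ∈ S) : flip S (flip S x) = x := by
  have h2 := flip_mem h
  rw [show flip S (flip S x) = _ from dif_pos h2]
  have : (⟨flip S x, h2⟩ : S) =
      (S.orderIsoOfFin rfl) (Fin.rev ((S.orderIsoOfFin rfl).symm ⟨x, h⟩)) := by
    apply Subtype.ext
    simp only [flip, dif_pos h]
  rw [this]
  simp

theorem flip_lt {S : Finset α} {x y : α} (hx : x ∈ S) (hy : y ∈ S) :
    flip S x < flip S y ↔ y < x := by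
  unfold flip
  rw [dif_pos hx, dif_pos hy, Subtype.coe_lt_coe, OrderIso.lt_iff_lt, Fin.rev_lt_rev,
    OrderIso.lt_iff_lt, Subtype.mk_lt_mk]

/-- Reverse-complement of a list within its own set of values. -/
noncomputable def rc (l : List α) : List α := (l.map (flip l.toFinset)).reverse

theorem rc_perm {l : List α} (h : l.Nodup) : (rc l).Perm l := by
  unfold rc
  refine (List.reverse_perm _).trans ?_
  have hn : (l.map (flip l.toFinset)).Nodup := by
    refine List.Nodup.map_on ?_ h
    intro x hx y hy hxy
    rw [← flip_flip (List.mem_toFinset.2 hx), hxy, flip_flip (List.mem_toFinset.2 hy)]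
  rw [List.perm_ext_iff_of_nodup hn h]
  intro a
  constructor
  · intro ha
    obtain ⟨b, hb, rfl⟩ := List.mem_map.1 ha
    exact List.mem_toFinset.1 (flip_mem (List.mem_toFinset.2 hb))
  · intro ha
    refine List.mem_map.2 ⟨flip l.toFinset a, ?_, flip_flip (List.mem_toFinset.2 ha)⟩
    exact List.mem_toFinset.1 (flip_mem (List.mem_toFinset.2 ha))

theorem rc_rc {l : List α} (h : l.Nodup) : rc (rc l) = l := by
  have hp := rc_perm h
  have hs : (rc l).toFinset = l.toFinset := List.toFinset_eq_of_perm _ _ hp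
  conv_lhs => rw [rc]
  rw [hs, rc, List.map_reverse, List.reverse_reverse, List.map_map]
  conv_rhs => rw [← List.map_id l]
  apply List.map_congr_left
  intro a ha
  exact flip_flip (List.mem_toFinset.2 ha)

/-- descents -/
def desL : List α → ℕ
  | [] => 0
  | [_] => 0
  | a :: b :: t => (if b < a then 1 else 0) + desL (b :: t)

/-- inversions -/
def invL : List α → ℕ
  | [] => 0
  | a :: t => t.countP (· < a) + invL t

/-- consecutive occurrences of `T` -/
def has (T : α → α → α → Prop) (l : List α) : Prop :=
  ∃ x y z, [x, y, z] <:+: l ∧ T x y z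

/-- quasi-consecutive occurrences of `T` followed by something larger -/
def hasQ (T : α → α → α → Prop) : List α → Prop
  | x :: y :: z :: s => (T x y z ∧ ∃ w ∈ s, x < w ∧ y < w ∧ z < w) ∨ hasQ T (y :: z :: s)
  | _ => False

theorem has_cons3 (T : α → α → α → Prop) (x y z : α) (s : List α) :
    has T (x :: y :: z :: s) ↔ T x y z ∨ has T (y :: z :: s) := by
  constructor
  · rintro ⟨a, b, c, h, hT⟩
    rcases List.infix_cons_iff.1 h with h | h
    · simp at h
      obtain ⟨rfl, rfl, rfl⟩ := h
      exact Or.inl hT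
    · exact Or.inr ⟨a, b, c, h, hT⟩
  · rintro (h | ⟨a, b, c, h, hT⟩)
    · exact ⟨x, y, z, ⟨[], s, by simp⟩, h⟩
    · exact ⟨a, b, c, List.infix_cons_iff.2 (Or.inr h), hT⟩

theorem not_has (T : α → α → α → Prop) (l : List α) (h : l.length < 3) : ¬ has T l := by
  rintro ⟨a, b, c, h', -⟩
  have := h'.length_le
  simp at this
  omega

theorem hasQ_max_cons (T : α → α → α → Prop) (M : α) (t : List α) (ht : ∀ x ∈ t, x < M) :
    hasQ T (M :: t) ↔ hasQ T t := by
  match t, ht with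
  | [], _ => simp [hasQ]
  | [a], _ => simp [hasQ]
  | a :: b :: s, ht =>
    rw [hasQ]
    constructor
    · rintro (⟨-, w, hw, h, -⟩ | h)
      · exact absurd h (not_lt.2 (ht w (by simp [hw])).le)
      · exact h
    · exact Or.inr

theorem hasQ_append (T : α → α → α → Prop) (M : α) (t : List α) (ht : ∀ x ∈ t, x < M) :
    ∀ s : List α, (∀ x ∈ s, x < M) → (hasQ T (s ++ M :: t) ↔ has T s ∨ hasQ T t)
  | [], _ => by
    simp only [List.nil_append, hasQ_max_cons T M t ht, not_has T [] (by simp), false_or]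
  | [x], _ => by
    have h0 := not_has T [x] (by simp)
    have h1 := hasQ_max_cons T M t ht
    simp only [h0, false_or, ← h1]
    cases t with
    | nil => simp [hasQ]
    | cons a t =>
      simp only [List.cons_append, List.nil_append]
      conv_lhs => rw [hasQ]
      constructor
      · rintro (⟨-, w, hw, -, h, -⟩ | h)
        · exact absurd h (not_lt.2 (ht w (by simp [hw])).le)
        · exact h
      · exact Or.inr
  | [x, y], hs => by
    have h0 := not_has T [x, y] (by simp)
    have h1 := hasQ_append T M t ht [y] (fun x hx => hs x (by simp_all))
    have h2 := not_has T [y] (by simp)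
    simp only [h2, false_or] at h1
    simp only [h0, false_or, ← h1]
    simp only [List.cons_append, List.nil_append]
    conv_lhs => rw [hasQ]
    constructor
    · rintro (⟨-, w, hw, -, -, h⟩ | h)
      · exact absurd h (not_lt.2 (ht w hw).le)
      · exact h
    · exact Or.inr
  | x :: y :: z :: s, hs => by
    have h1 := hasQ_append T M t ht (y :: z :: s) (fun a ha => hs a (List.mem_cons_of_mem _ ha))
    simp only [List.cons_append] at h1 ⊢
    rw [hasQ, h1, has_cons3, or_assoc]
    have : ∃ w ∈ s ++ M :: t, x < w ∧ y < w ∧ z < w :=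
      ⟨M, by simp, hs x (by simp), hs y (by simp), hs z (by simp)⟩
    rw [and_iff_left this]

theorem invL_append : ∀ s t : List α,
    invL (s ++ t) = invL s + invL t + (s.map fun a => t.countP (· < a)).sum
  | [], t => by simp [invL]
  | a :: s, t => by
    simp only [List.cons_append, invL, invL_append s t, List.countP_append, List.map_cons,
      List.sum_cons]
    omega

theorem invL_rev_map (c : α → α) : ∀ l : List α,
    (∀ x ∈ l, ∀ y ∈ l, (c x < c y ↔ y < x)) → invL (l.map c).reverse = invL l
  | [], _ => by simp [invL]
  | a :: l, h => by
    rw [List.map_cons, List.reverse_cons, invL_append,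
      invL_rev_map c l (fun x hx y hy => h x (by simp [hx]) y (by simp [hy]))]
    simp only [invL, List.countP_nil, List.map_reverse, List.sum_reverse, List.map_map]
    have : (l.map ((fun b => [c a].countP (· < b)) ∘ c)).sum = l.countP (· < a) := by
      have h' : ∀ x ∈ l, (c a < c x ↔ x < a) := fun x hx => h a (by simp) x (by simp [hx])
      clear h
      induction l with
      | nil => simp
      | cons b l ih =>
        rw [List.map_cons, List.sum_cons, ih (fun x hx => h' x (by simp [hx])), List.countP_cons]
        have := h' b (by simp)
        simp [List.countP_cons, this]
        omega
    rw [this]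
    omega

theorem invL_rc (l : List α) : invL (rc l) = invL l :=
  invL_rev_map _ l fun _ hx _ hy => flip_lt (List.mem_toFinset.2 hx) (List.mem_toFinset.2 hy)

theorem desL_append : ∀ (s : List α) (a : α) (t : List α),
    desL (s ++ a :: t) = desL (s ++ [a]) + desL (a :: t)
  | [], a, t => by simp [desL]
  | [b], a, t => by simp [desL]
  | b :: c :: s, a, t => by
    have := desL_append (c :: s) a t
    simp only [List.cons_append, desL] at this ⊢
    omega

theorem desL_rev_map (c : α → α) : ∀ l : List α,
    (∀ x ∈ l, ∀ y ∈ l, (c x < c y ↔ y < x)) → desL (l.map c).reverse = desL l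
  | [], _ => by simp [desL]
  | [a], _ => by simp [desL]
  | a :: b :: l, h => by
    have ih := desL_rev_map c (b :: l) (fun x hx y hy => h x (by simp_all) y (by simp_all))
    simp only [List.map_cons, List.reverse_cons, List.append_assoc, List.cons_append,
      List.nil_append] at ih ⊢
    rw [desL_append, ih]
    simp only [desL, h a (by simp) b (by simp)]
    omega

theorem desL_rc (l : List α) : desL (rc l) = desL l :=
  desL_rev_map _ l fun _ hx _ hy => flip_lt (List.mem_toFinset.2 hx) (List.mem_toFinset.2 hy)

theorem desL_concat_max (M : α) : ∀ s : List α, (∀ x ∈ s, x < M) → desL (s ++ [M]) = desL s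
  | [], _ => by simp [desL]
  | [b], h => by
    have := h b (by simp)
    simp [desL, this.le]
  | b :: c :: s, h => by
    have := desL_concat_max M (c :: s) (fun x hx => h x (by simp_all))
    simp only [List.cons_append, desL] at this ⊢
    omega

theorem desL_max_cons (M : α) (t : List α) (h : ∀ x ∈ t, x < M) :
    desL (M :: t) = (if t.length = 0 then 0 else 1) + desL t := by
  cases t with
  | nil => simp [desL]
  | cons a t => simp [desL, h a (by simp)]

/-- pattern 312 -/
def T312 (x y z : α) : Prop := y < z ∧ z < x

/-- pattern 231 -/
def T231 (x y z : α) : Prop := z < x ∧ x < y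

theorem infix_rc {x y z : α} {l : List α} (h : [x, y, z] <:+: l) :
    [flip l.toFinset z, flip l.toFinset y, flip l.toFinset x] <:+: rc l := by
  have h2 := List.reverse_infix.2 (h.map (flip l.toFinset))
  simpa [rc] using h2

theorem has_rc_aux {l : List α} (h : has T312 l) : has T231 (rc l) := by
  obtain ⟨x, y, z, hi, h1, h2⟩ := h
  have hx : x ∈ l.toFinset := List.mem_toFinset.2 (hi.subset (by simp))
  have hy : y ∈ l.toFinset := List.mem_toFinset.2 (hi.subset (by simp))
  have hz : z ∈ l.toFinset := List.mem_toFinset.2 (hi.subset (by simp))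
  exact ⟨_, _, _, infix_rc hi, (flip_lt hx hz).2 h2, (flip_lt hz hy).2 h1⟩

theorem has_rc_aux2 {l : List α} (h : has T231 l) : has T312 (rc l) := by
  obtain ⟨x, y, z, hi, h1, h2⟩ := h
  have hx : x ∈ l.toFinset := List.mem_toFinset.2 (hi.subset (by simp))
  have hy : y ∈ l.toFinset := List.mem_toFinset.2 (hi.subset (by simp))
  have hz : z ∈ l.toFinset := List.mem_toFinset.2 (hi.subset (by simp))
  exact ⟨_, _, _, infix_rc hi, (flip_lt hy hx).2 h2, (flip_lt hx hz).2 h1⟩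

theorem has_rc {l : List α} (hl : l.Nodup) : has T231 (rc l) ↔ has T312 l :=
  ⟨fun h => by simpa [rc_rc hl] using has_rc_aux2 h, has_rc_aux⟩

/-- the bijection on lists -/
noncomputable def phi (l : List α) : List α :=
  if h : 0 < l.length then
    rc (l.takeWhile (· ≠ l.maximum_of_length_pos h)) ++
      l.maximum_of_length_pos h :: phi ((l.dropWhile (· ≠ l.maximum_of_length_pos h)).tail)
  else []
termination_by l.length
decreasing_by
  have := (List.dropWhile_sublist (l := l) (· ≠ l.maximum_of_length_pos h)).length_le
  rw [List.length_tail]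
  omega

theorem phi_nil : phi ([] : List α) = [] := by
  rw [phi]; simp

theorem phi_append (s : List α) (M : α) (t : List α) (hs : ∀ x ∈ s, x < M)
    (ht : ∀ x ∈ t, x < M) : phi (s ++ M :: t) = rc s ++ M :: phi t := by
  have h : 0 < (s ++ M :: t).length := by simp
  have hM : (s ++ M :: t).maximum_of_length_pos h = M := by
    apply le_antisymm
    · have := List.maximum_of_length_pos_mem h
      rcases List.mem_append.1 this with h1 | h1
      · exact (hs _ h1).le
      · rcases List.mem_cons.1 h1 with h1 | h1
        · exact h1.le
        · exact (ht _ h1).le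
    · exact List.le_maximum_of_length_pos_of_mem (by simp) h
  rw [phi, dif_pos h, hM]
  have hs' : ∀ x ∈ s, (decide (x ≠ M)) = true := fun x hx => by simpa using (hs x hx).ne
  rw [List.takeWhile_append_of_pos hs', List.dropWhile_append_of_pos hs']
  simp

theorem induct {P : List α → Prop} (h0 : P [])
    (h1 : ∀ s M t, (∀ x ∈ s, x < M) → (∀ x ∈ t, x < M) → s.Nodup → t.Nodup → P t →
      P (s ++ M :: t)) : ∀ (n : ℕ) (l : List α), l.length = n → l.Nodup → P l := by
  intro n
  induction n using Nat.strong_induction_on with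
  | _ n ih =>
    intro l hl hn
    by_cases h : 0 < l.length
    · obtain ⟨s, t, hst⟩ := List.append_of_mem (List.maximum_of_length_pos_mem h)
      have hle : ∀ x ∈ l, x ≤ l.maximum_of_length_pos h :=
        fun x hx => List.le_maximum_of_length_pos_of_mem hx h
      generalize l.maximum_of_length_pos h = M at hst hle
      subst hst
      have hn' := List.nodup_middle.1 hn
      rw [List.nodup_cons] at hn'
      have hn2 := List.nodup_append.1 hn'.2
      refine h1 s M t ?_ ?_ hn2.1 hn2.2.1 (ih t.length ?_ t rfl hn2.2.1)
      · intro x hx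
        refine lt_of_le_of_ne (hle x (by simp [hx])) ?_
        rintro rfl
        exact hn'.1 (by simp [hx])
      · intro x hx
        refine lt_of_le_of_ne (hle x (by simp [hx])) ?_
        rintro rfl
        exact hn'.1 (by simp [hx])
      · simp at hl; omega
    · have : l = [] := by
        apply List.length_eq_zero_iff.1; omega
      rw [this]; exact h0

theorem phi_spec (l : List α) (hl : l.Nodup) :
    (phi l).Perm l ∧ phi (phi l) = l ∧ desL (phi l) = desL l ∧ invL (phi l) = invL l ∧
      (hasQ T231 (phi l) ↔ hasQ T312 l) := by
  refine induct (P := fun l => (phi l).Perm l ∧ phi (phi l) = l ∧ desL (phi l) = desL l ∧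
    invL (phi l) = invL l ∧ (hasQ T231 (phi l) ↔ hasQ T312 l)) ?_ ?_ l.length l rfl hl
  · simp [phi_nil, hasQ]
  · rintro s M t hs ht hsn htn ⟨i1, i2, i3, i4, i5⟩
    have hp := rc_perm hsn
    have hs' : ∀ x ∈ rc s, x < M := fun x hx => hs x (hp.subset hx)
    have ht' : ∀ x ∈ phi t, x < M := fun x hx => ht x (i1.subset hx)
    rw [phi_append s M t hs ht]
    refine ⟨hp.append (i1.cons M), ?_, ?_, ?_, ?_⟩
    · rw [phi_append _ _ _ hs' ht', rc_rc hsn, i2]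
    · rw [desL_append, desL_append s, desL_concat_max M _ hs', desL_concat_max M _ hs,
        desL_max_cons M _ ht', desL_max_cons M _ ht, i3, desL_rc, i1.length_eq]
    · rw [invL_append, invL_append s, invL_rc]
      have e1 : ∀ a, (M :: phi t).countP (· < a) = (M :: t).countP (· < a) :=
        fun a => (i1.cons M).countP_eq _
      have e2 : (phi t).countP (· < M) = t.countP (· < M) := i1.countP_eq _
      simp only [e1, invL, i4, e2]
      rw [(hp.map _).sum_eq]
    · rw [hasQ_append _ M _ ht' _ hs', hasQ_append _ M _ ht _ hs, i5, has_rc hsn]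

theorem hasQ_iff (T : α → α → α → Prop) : ∀ l : List α, hasQ T l ↔
    ∃ (i j : ℕ) (hj : j < l.length) (hij : i + 3 ≤ j),
      T l[i] l[i+1] l[i+2] ∧ l[i] < l[j] ∧ l[i+1] < l[j] ∧ l[i+2] < l[j]
  | [] => by simp [hasQ]
  | [a] => by
    simp only [hasQ, false_iff]; rintro ⟨i, j, hj, hij, -⟩; simp at hj; omega
  | [a, b] => by
    simp only [hasQ, false_iff]; rintro ⟨i, j, hj, hij, -⟩; simp at hj; omega
  | x :: y :: z :: s => by
    rw [hasQ, hasQ_iff T (y :: z :: s)]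
    constructor
    · rintro (⟨h, w, hw, h'⟩ | ⟨i, j, hj, hij, h⟩)
      · obtain ⟨k, hk, rfl⟩ := List.mem_iff_getElem.1 hw
        exact ⟨0, k + 3, by simp; omega, by omega, by simpa using ⟨h, h'⟩⟩
      · exact ⟨i + 1, j + 1, by simpa using hj, by omega, h⟩
    · rintro ⟨i, j, hj, hij, h⟩
      cases i with
      | zero =>
        left
        obtain ⟨k, rfl⟩ : ∃ k, j = k + 3 := ⟨j - 3, by omega⟩
        have hk : k < s.length := by simp at hj; omega
        exact ⟨h.1, s[k], List.getElem_mem hk, h.2⟩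
      | succ i =>
        right
        obtain ⟨k, rfl⟩ : ∃ k, j = k + 1 := ⟨j - 1, by omega⟩
        exact ⟨i, k, by simpa using hj, by omega, h⟩

end lists

theorem des_ofFn {β : Type} [LinearOrder β] : ∀ {n : ℕ} (f : Fin n → β),
    (Finset.univ.filter fun i : Fin n =>
      ∃ h : (i : ℕ) + 1 < n, f ⟨(i : ℕ) + 1, h⟩ < f i).card = desL (List.ofFn f)
  | 0, f => by simp [desL]
  | 1, f => by
    rw [Finset.card_eq_zero.2]
    · simp [desL]
    · apply Finset.filter_eq_empty_iff.2
      rintro i - ⟨h, -⟩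
      omega
  | n + 2, f => by
    have ih := des_ofFn (fun i : Fin (n + 1) => f i.succ)
    rw [List.ofFn_succ, List.ofFn_succ, desL]
    rw [List.ofFn_succ] at ih
    rw [← ih, Finset.card_filter, Finset.card_filter, Fin.sum_univ_succ]
    congr 1
    · simp
      rfl
    · apply Finset.sum_congr rfl
      intro i _
      congr 1
      simp

theorem inv_ofFn {β : Type} [LinearOrder β] : ∀ {n : ℕ} (f : Fin n → β),
    (Finset.univ.filter fun p : Fin n × Fin n => p.1 < p.2 ∧ f p.2 < f p.1).card =
      invL (List.ofFn f)
  | 0, f => by simp [invL]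
  | n + 1, f => by
    have ih := inv_ofFn (fun i : Fin n => f i.succ)
    rw [List.ofFn_succ, invL, ← ih, Finset.card_filter, Finset.card_filter,
      Fintype.sum_prod_type, Fintype.sum_prod_type, Fin.sum_univ_succ]
    congr 1
    · rw [Fin.sum_univ_succ]
      simp only [lt_self_iff_false, false_and, if_false, zero_add, Fin.succ_pos, true_and]
      generalize f 0 = a
      have key : ∀ {m : ℕ} (g : Fin m → β), (∑ i, if g i < a then 1 else 0) =
          (List.ofFn g).countP (· < a) := by
        intro m
        induction m with
        | zero => simp
        | succ m ih2 =>
          intro g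
          rw [Fin.sum_univ_succ, List.ofFn_succ, List.countP_cons, ih2]
          simp [add_comm]
      exact key _
    · apply Finset.sum_congr rfl
      intro i _
      rw [Fin.sum_univ_succ]
      simp

theorem avoidsA_iff {n : ℕ} (π : Equiv.Perm (Fin n)) :
    AvoidsA π ↔ ¬ hasQ T312 (List.ofFn π) := by
  unfold AvoidsA
  rw [hasQ_iff, not_iff_not]
  constructor
  · rintro ⟨i, j, hj, hij, h1, h2, h3⟩
    refine ⟨i, j, by simpa using hj, hij, ?_⟩
    simp only [List.getElem_ofFn, T312]
    exact ⟨⟨h1, h2⟩, h3, (h1.trans h2).trans h3, h2.trans h3⟩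
  · rintro ⟨i, j, hj, hij, h⟩
    simp only [List.getElem_ofFn, T312] at h
    exact ⟨i, j, by simpa using hj, hij, h.1.1, h.1.2, h.2.1⟩

theorem avoidsB_iff {n : ℕ} (π : Equiv.Perm (Fin n)) :
    AvoidsB π ↔ ¬ hasQ T231 (List.ofFn π) := by
  unfold AvoidsB
  rw [hasQ_iff, not_iff_not]
  constructor
  · rintro ⟨i, j, hj, hij, h1, h2, h3⟩
    refine ⟨i, j, by simpa using hj, hij, ?_⟩
    simp only [List.getElem_ofFn, T231]
    exact ⟨⟨h1, h2⟩, h2.trans h3, h3, (h1.trans h2).trans h3⟩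
  · rintro ⟨i, j, hj, hij, h⟩
    simp only [List.getElem_ofFn, T231] at h
    exact ⟨i, j, by simpa using hj, hij, h.1.1, h.1.2, h.2.2.1⟩

theorem exists_perm {n : ℕ} (l : List (Fin n)) (hl : l.Nodup) (hlen : l.length = n) :
    ∃ π : Equiv.Perm (Fin n), List.ofFn π = l := by
  have hinj : Function.Injective (fun i : Fin n => l.get (i.cast hlen.symm)) :=
    (List.nodup_iff_injective_get.1 hl).comp (Fin.cast_injective _)
  refine ⟨Equiv.ofBijective _ (Finite.injective_iff_bijective.1 hinj), ?_⟩
  apply List.ext_getElem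
  · simp [hlen]
  · intro i h1 h2
    simp

end S13

/-- The joint distribution of descents and inversions agrees on avoiders of 3̲1̲2̲4 and
of 2̲3̲1̲4. -/
theorem statement13 (n : ℕ) (hn : 1 ≤ n) (k m : ℕ) :
    Nat.card {π : Equiv.Perm (Fin n) // AvoidsA π ∧ des π = k ∧ inversions π = m} =
      Nat.card {π : Equiv.Perm (Fin n) // AvoidsB π ∧ des π = k ∧ inversions π = m} := by
  have hnd : ∀ π : Equiv.Perm (Fin n), (List.ofFn π).Nodup :=
    fun π => List.nodup_ofFn.2 π.injective
  have hex : ∀ π : Equiv.Perm (Fin n), ∃ π' : Equiv.Perm (Fin n),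
      List.ofFn π' = S13.phi (List.ofFn π) := by
    intro π
    have hp := (S13.phi_spec _ (hnd π)).1
    exact S13.exists_perm _ (hp.nodup_iff.2 (hnd π)) (by rw [hp.length_eq]; simp)
  choose Φ hΦ using hex
  have hinv : Function.Involutive Φ := by
    intro π
    have h : List.ofFn (Φ (Φ π)) = List.ofFn π := by
      rw [hΦ, hΦ, (S13.phi_spec _ (hnd π)).2.1]
    exact DFunLike.coe_injective (List.ofFn_injective h)
  refine Nat.card_congr (Equiv.subtypeEquiv hinv.toPerm ?_)
  intro π
  obtain ⟨-, -, h3, h4, h5⟩ := S13.phi_spec _ (hnd π)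
  have hd : des (Φ π) = des π := by
    have e1 := S13.des_ofFn (Φ π)
    have e2 := S13.des_ofFn π
    rw [hΦ, h3, ← e2] at e1
    unfold des
    convert e1
  have hi : inversions (Φ π) = inversions π := by
    have e1 := S13.inv_ofFn (Φ π)
    have e2 := S13.inv_ofFn π
    rw [hΦ, h4, ← e2] at e1
    unfold inversions
    convert e1
  have hA : AvoidsB (Φ π) ↔ AvoidsA π := by
    rw [S13.avoidsA_iff, S13.avoidsB_iff, hΦ, h5]
  rw [Function.Involutive.coe_toPerm, hA, hd, hi]
end
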